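/- arXiv:1402.4694 — 2 statements merged into one kernel-verified Lean document; each statement's English description precedes it below -/
import Mathlib

section
/- Let α ∈ (0,π), γ ∈ [0,π/2], and B = (sin γ·cos(α/2), sin γ·sin(α/2), cos γ). Then the band function τ ↦ s(B;α,τ) attains its infimum: there exists τ* ∈ ℝ such that s(B;α,τ*) = inf_{τ∈ℝ} s(B;α,τ). -/
open Real MeasureTheory Set Filter

noncomputable section

namespace MagWedge

/-- The infinite sector `S_α := {(x₁,x₂) : |x₂| ≤ x₁·tan(α/2)}`. -/
def sector (α : ℝ) : Set (ℝ × ℝ) :=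
  {x | |x.2| ≤ x.1 * Real.tan (α / 2)}

/-- The infinite wedge `W_α := S_α × ℝ` (coordinates `(x₁, x₂, x₃)`). -/
def wedge (α : ℝ) : Set (ℝ × ℝ × ℝ) :=
  {x | |x.2.1| ≤ x.1 * Real.tan (α / 2)}

/-- The upper half-plane `Hp^up := {x₂ < x₁·tan(α/2)}`. -/
def hpUp (α : ℝ) : Set (ℝ × ℝ) :=
  {x | x.2 < x.1 * Real.tan (α / 2)}

/-- The lower half-plane `Hp^low := {x₂ > −x₁·tan(α/2)}`. -/
def hpLow (α : ℝ) : Set (ℝ × ℝ) :=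
  {x | -(x.1 * Real.tan (α / 2)) < x.2}

/-- The magnetic/electric energy of `u` on a planar domain `Ω`, for magnetic field
`(b₁,b₂,b₃)` (gauge `A̲ = (−x₂ b₃, 0)`) and Fourier parameter `τ`. -/
def energy2D (Ω : Set (ℝ × ℝ)) (b1 b2 b3 τ : ℝ) (u : ℝ × ℝ → ℂ) : ℝ :=
  ∫ x in Ω,
    ‖(-Complex.I) * fderiv ℝ u x (1, 0) + ((x.2 * b3 : ℝ) : ℂ) * u x‖ ^ 2
      + ‖fderiv ℝ u x (0, 1)‖ ^ 2
      + (x.1 * b2 - x.2 * b1 - τ) ^ 2 * ‖u x‖ ^ 2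

/-- The squared `L²`-norm of `u` on a planar domain `Ω`. -/
def norm2D (Ω : Set (ℝ × ℝ)) (u : ℝ × ℝ → ℂ) : ℝ := ∫ x in Ω, ‖u x‖ ^ 2

/-- The bottom of the spectrum of the Neumann realization of
`(−i∇−A̲)² + (x₁b₂−x₂b₁−τ)²` on `Ω`, via the Rayleigh quotient. -/
def specInf2D (Ω : Set (ℝ × ℝ)) (b1 b2 b3 τ : ℝ) : ℝ :=
  sInf { r : ℝ | ∃ u : ℝ × ℝ → ℂ, ContDiff ℝ (⊤ : ℕ∞) u ∧ HasCompactSupport u ∧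
    0 < norm2D Ω u ∧ r = energy2D Ω b1 b2 b3 τ u / norm2D Ω u }

/-- The band function `s(B;α,τ)` on the sector `S_α`. -/
def bandFn (α b1 b2 b3 τ : ℝ) : ℝ := specInf2D (sector α) b1 b2 b3 τ

/-- `Σ(B;α,τ,R)` : the Rayleigh quotient infimum over functions supported outside the
(closed Euclidean) ball of radius `R` centered at the origin. -/
def SigmaR (α b1 b2 b3 τ R : ℝ) : ℝ :=
  sInf { r : ℝ | ∃ u : ℝ × ℝ → ℂ, ContDiff ℝ (⊤ : ℕ∞) u ∧ HasCompactSupport u ∧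
    (tsupport u ⊆ {x : ℝ × ℝ | R ^ 2 < x.1 ^ 2 + x.2 ^ 2}) ∧
    0 < norm2D (sector α) u ∧
    r = energy2D (sector α) b1 b2 b3 τ u / norm2D (sector α) u }

/-- The bottom of the essential spectrum via Persson's characterization:
`s_ess(B;α,τ) = sup_{R>0} Σ(B;α,τ,R)`. -/
def sEss (α b1 b2 b3 τ : ℝ) : ℝ :=
  sSup { r : ℝ | ∃ R > (0 : ℝ), r = SigmaR α b1 b2 b3 τ R }

/-- The 3D magnetic energy on a domain `Ω ⊆ ℝ³` for the constant field `(b₁,b₂,b₃)`,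
in the gauge `A = (−x₂b₃, 0, x₂b₁ − x₁b₂)`. -/
def energy3D (Ω : Set (ℝ × ℝ × ℝ)) (b1 b2 b3 : ℝ) (u : ℝ × ℝ × ℝ → ℂ) : ℝ :=
  ∫ x in Ω,
    ‖(-Complex.I) * fderiv ℝ u x (1, 0, 0) + ((x.2.1 * b3 : ℝ) : ℂ) * u x‖ ^ 2
      + ‖fderiv ℝ u x (0, 1, 0)‖ ^ 2
      + ‖(-Complex.I) * fderiv ℝ u x (0, 0, 1) - ((x.2.1 * b1 : ℝ) : ℂ) * u x
          + ((x.1 * b2 : ℝ) : ℂ) * u x‖ ^ 2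

/-- The squared `L²`-norm of `u` on a domain `Ω ⊆ ℝ³`. -/
def norm3D (Ω : Set (ℝ × ℝ × ℝ)) (u : ℝ × ℝ × ℝ → ℂ) : ℝ := ∫ x in Ω, ‖u x‖ ^ 2

/-- `λ(B;W_α)` : the bottom of the spectrum of the Neumann magnetic Laplacian on the
wedge `W_α` with constant magnetic field `B = (b₁,b₂,b₃)`. -/
def lambdaWedge (α b1 b2 b3 : ℝ) : ℝ :=
  sInf { r : ℝ | ∃ u : ℝ × ℝ × ℝ → ℂ, ContDiff ℝ (⊤ : ℕ∞) u ∧ HasCompactSupport u ∧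
    0 < norm3D (wedge α) u ∧ r = energy3D (wedge α) b1 b2 b3 u / norm3D (wedge α) u }

/-- The de Gennes function `μ₁(ξ)`: bottom of the spectrum of the Neumann realization of
`−d²/dt² + (t−ξ)²` on the half-line. -/
def deGennes (ξ : ℝ) : ℝ :=
  sInf { r : ℝ | ∃ u : ℝ → ℂ, ContDiff ℝ (⊤ : ℕ∞) u ∧ HasCompactSupport u ∧
    (0 < ∫ t in Ioi (0 : ℝ), ‖u t‖ ^ 2) ∧
    r = (∫ t in Ioi (0 : ℝ), ‖deriv u t‖ ^ 2 + (t - ξ) ^ 2 * ‖u t‖ ^ 2) /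
        (∫ t in Ioi (0 : ℝ), ‖u t‖ ^ 2) }

/-- `Θ₀ := inf_ξ μ₁(ξ)`. -/
def Theta0 : ℝ := ⨅ ξ : ℝ, deGennes ξ

/-- The half-space `{(s,t,z) : t > 0}` in ℝ³. -/
def halfSpace3 : Set (ℝ × ℝ × ℝ) := {x | 0 < x.2.1}

/-- `σ(θ)` : the bottom of the spectrum of the Neumann magnetic Laplacian on the half-space
with a unit magnetic field making angle `θ` with the boundary. -/
def sigmaHS (θ : ℝ) : ℝ :=
  sInf { r : ℝ | ∃ u : ℝ × ℝ × ℝ → ℂ, ContDiff ℝ (⊤ : ℕ∞) u ∧ HasCompactSupport u ∧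
    (0 < ∫ x in halfSpace3, ‖u x‖ ^ 2) ∧
    r = (∫ x in halfSpace3,
          ‖fderiv ℝ u x (1, 0, 0)‖ ^ 2 + ‖fderiv ℝ u x (0, 1, 0)‖ ^ 2
            + ‖(-Complex.I) * fderiv ℝ u x (0, 0, 1)
                - ((x.2.1 * Real.cos θ : ℝ) : ℂ) * u x
                + ((x.1 * Real.sin θ : ℝ) : ℂ) * u x‖ ^ 2) /
        (∫ x in halfSpace3, ‖u x‖ ^ 2) }

/-- `μ(α)` : the bottom of the spectrum of the magnetic Neumann Laplacian on the sector
`S_α` with unit constant (scalar) magnetic field. -/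
def muSector (α : ℝ) : ℝ :=
  sInf { r : ℝ | ∃ u : ℝ × ℝ → ℂ, ContDiff ℝ (⊤ : ℕ∞) u ∧ HasCompactSupport u ∧
    0 < norm2D (sector α) u ∧
    r = (∫ x in sector α,
          ‖(-Complex.I) * fderiv ℝ u x (1, 0) + (x.2 : ℂ) * u x‖ ^ 2
            + ‖fderiv ℝ u x (0, 1)‖ ^ 2) / norm2D (sector α) u }

end MagWedge

namespace MagWedge

/-- one-dimensional de Gennes energy -/
def Q1 (ξ : ℝ) (f : ℝ → ℂ) : ℝ := ∫ t in Ioi (0:ℝ), (‖deriv f t‖ ^ 2 + (t - ξ) ^ 2 * ‖f t‖ ^ 2)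

/-- one-dimensional norm -/
def N1 (f : ℝ → ℂ) : ℝ := ∫ t in Ioi (0:ℝ), ‖f t‖ ^ 2

/-- all Rayleigh quotients -/
def ThSet : Set ℝ := {r | ∃ (ξ : ℝ) (f : ℝ → ℂ), ContDiff ℝ (⊤ : ℕ∞) f ∧ HasCompactSupport f ∧
  0 < N1 f ∧ r = Q1 ξ f / N1 f}

/-- the de Gennes constant -/
def Th : ℝ := sInf ThSet

lemma Q1_nonneg (ξ : ℝ) (f : ℝ → ℂ) : 0 ≤ Q1 ξ f :=
  integral_nonneg fun t => by positivity

lemma N1_nonneg (f : ℝ → ℂ) : 0 ≤ N1 f :=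
  integral_nonneg fun t => by positivity

lemma ThSet_bdd : BddBelow ThSet := by
  refine ⟨0, ?_⟩
  rintro r ⟨ξ, f, -, -, -, rfl⟩
  exact div_nonneg (Q1_nonneg _ _) (N1_nonneg _)

lemma Th_nonneg : 0 ≤ Th := by
  apply Real.sInf_nonneg
  rintro r ⟨ξ, f, -, -, -, rfl⟩
  exact div_nonneg (Q1_nonneg _ _) (N1_nonneg _)

lemma Th_mul_le (ξ : ℝ) (f : ℝ → ℂ) (hf : ContDiff ℝ (⊤ : ℕ∞) f) (hc : HasCompactSupport f) :
    Th * N1 f ≤ Q1 ξ f := by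
  rcases (N1_nonneg f).eq_or_lt with h | h
  · rw [← h, mul_zero]; exact Q1_nonneg _ _
  · rw [← le_div_iff₀ h]
    exact csInf_le ThSet_bdd ⟨ξ, f, hf, hc, h, rfl⟩

/-- cutoff function -/
def cut (y : ℝ) : ℝ := Real.smoothTransition (2 - y ^ 2)

lemma cut_contDiff : ContDiff ℝ (⊤ : ℕ∞) cut :=
  Real.smoothTransition.contDiff.comp (by fun_prop)

lemma cut_eq_one {y : ℝ} (h : |y| ≤ 1) : cut y = 1 := by
  apply Real.smoothTransition.one_of_one_le
  have : y ^ 2 ≤ 1 := by rw [← sq_abs]; nlinarith [abs_nonneg y]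
  linarith

lemma cut_eq_zero {y : ℝ} (h : 2 ≤ |y|) : cut y = 0 := by
  apply Real.smoothTransition.zero_of_nonpos
  have : 4 ≤ y ^ 2 := by rw [← sq_abs]; nlinarith [abs_nonneg y]
  linarith

lemma cut_nonneg (y : ℝ) : 0 ≤ cut y := Real.smoothTransition.nonneg _
lemma cut_le_one (y : ℝ) : cut y ≤ 1 := Real.smoothTransition.le_one _

lemma cut_compact : HasCompactSupport cut := by
  apply HasCompactSupport.intro (isCompact_Icc (a := (-2:ℝ)) (b := 2))
  intro x hx
  apply cut_eq_zero
  by_contra h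
  push Not at h
  exact hx ⟨by linarith [(abs_lt.1 h).1], (abs_lt.1 h).2.le⟩

lemma cut_deriv_bdd : ∃ M : ℝ, ∀ y, |deriv cut y| ≤ M := by
  obtain ⟨M, hM⟩ := (cut_contDiff.continuous_deriv (by simp)).bounded_above_of_compact_support
    cut_compact.deriv
  exact ⟨M, fun y => by simpa using hM y⟩

lemma trial_exists : ∃ (ξ : ℝ) (f : ℝ → ℂ), ContDiff ℝ (⊤ : ℕ∞) f ∧ HasCompactSupport f ∧
  0 < N1 f ∧ Q1 ξ f < N1 f := by
  obtain ⟨M, hM⟩ := cut_deriv_bdd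
  set g2 : ℝ → ℝ := fun t => Real.exp (-1 * t ^ 2) with hg2
  have hg2i : Integrable g2 := integrable_exp_neg_mul_sq one_pos
  have hg2c : Continuous g2 := by fun_prop
  set G := ∫ t in Ioi (0:ℝ), g2 t with hG
  set m := ∫ t in Ioc (0:ℝ) 1, t * g2 t with hm
  have hmi : IntegrableOn (fun t => t * g2 t) (Ioc (0:ℝ) 1) :=
    ((continuous_id.mul hg2c).integrableOn_Icc).mono_set Ioc_subset_Icc_self
  have hGpos : 0 < G := by
    rw [hG]
    rw [setIntegral_pos_iff_support_of_nonneg_ae (ae_of_all _ fun t => (Real.exp_pos _).le)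
      hg2i.integrableOn]
    have : Function.support g2 = univ := by
      ext t; simp [hg2, (Real.exp_pos _).ne']
    rw [this, univ_inter]; simp
  have hmpos : 0 < m := by
    rw [hm, ← intervalIntegral.integral_of_le zero_le_one]
    apply intervalIntegral.intervalIntegral_pos_of_pos_on
    · exact (continuous_id.mul hg2c).intervalIntegrable _ _
    · intro x hx; exact mul_pos hx.1 (Real.exp_pos _)
    · exact one_pos
  obtain ⟨n, hn⟩ := exists_nat_gt (max 1 (M ^ 2 * G ^ 2 / m ^ 2))
  have hn1 : (1:ℝ) < n := lt_of_le_of_lt (le_max_left _ _) hn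
  have hn2 : M ^ 2 * G ^ 2 / m ^ 2 < n := lt_of_le_of_lt (le_max_right _ _) hn
  have hn0 : (0:ℝ) < n := by linarith
  set χ : ℝ → ℝ := fun t => cut (t / n) with hχ
  set χ' : ℝ → ℝ := fun t => deriv cut (t / n) / n with hχ'
  have hχd : ∀ t, HasDerivAt χ (χ' t) t := by
    intro t
    have h1 := ((cut_contDiff.differentiable (by simp)) (t / n)).hasDerivAt
    have h2 : HasDerivAt (fun t : ℝ => t / n) (1 / n) t := (hasDerivAt_id t).div_const _
    have := h1.comp t h2
    simpa [hχ', hχ, Function.comp_def, div_eq_mul_inv] using this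
  have hχs : ContDiff ℝ (⊤ : ℕ∞) χ := cut_contDiff.comp (by fun_prop)
  have hχ'c : Continuous χ' := by
    have := cut_contDiff.continuous_deriv (by simp)
    fun_prop
  have hχsupp : HasCompactSupport χ := by
    apply HasCompactSupport.intro (isCompact_Icc (a := (-(2*n):ℝ)) (b := 2*n))
    intro x hx
    apply cut_eq_zero
    by_contra h
    push Not at h
    rw [abs_div, abs_of_pos hn0, div_lt_iff₀ hn0] at h
    exact hx ⟨by linarith [(abs_lt.1 h).1], (abs_lt.1 h).2.le⟩
  set F : ℝ → ℝ := fun t => χ t * Real.exp (-(t ^ 2) / 2) with hF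
  have hgd : ∀ t : ℝ, HasDerivAt (fun t : ℝ => Real.exp (-(t ^ 2) / 2))
      (-t * Real.exp (-(t ^ 2) / 2)) t := by
    intro t
    have h1 : HasDerivAt (fun t : ℝ => -(t ^ 2) / 2) (-t) t := by
      have := ((hasDerivAt_pow 2 t).neg).div_const 2
      convert! this using 1
      simp; ring
    convert! h1.exp using 1
    ring
  have hgsq : ∀ t : ℝ, Real.exp (-(t ^ 2) / 2) ^ 2 = g2 t := by
    intro t
    rw [hg2, ← Real.exp_nat_mul]
    congr 1; push_cast; ring
  have hFd : ∀ t, HasDerivAt F ((χ' t - t * χ t) * Real.exp (-(t ^ 2) / 2)) t := by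
    intro t
    convert! (hχd t).mul (hgd t) using 1
    ring
  have hFs : ContDiff ℝ (⊤ : ℕ∞) F := hχs.mul (by fun_prop)
  have hFc : HasCompactSupport F := hχsupp.mul_right
  set f : ℝ → ℂ := fun t => (F t : ℂ) with hf
  have hfs : ContDiff ℝ (⊤ : ℕ∞) f := Complex.ofRealCLM.contDiff.comp hFs
  have hfc : HasCompactSupport f := hFc.comp_left (g := fun x : ℝ => (x : ℂ)) (by simp)
  have hfd : ∀ t, ‖deriv f t‖ ^ 2 = (χ' t - t * χ t) ^ 2 * g2 t := by
    intro t
    rw [(hFd t).ofReal_comp.deriv, Complex.norm_real, Real.norm_eq_abs, sq_abs, mul_pow, hgsq]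
  have hfn : ∀ t, ‖f t‖ ^ 2 = χ t ^ 2 * g2 t := by
    intro t
    rw [hf, Complex.norm_real, Real.norm_eq_abs, sq_abs, hF]
    simp only [mul_pow, hgsq]
  have hχc := hχs.continuous
  have hI1 : Integrable (fun t => χ t ^ 2 * g2 t) := by
    apply Continuous.integrable_of_hasCompactSupport (by fun_prop)
    apply HasCompactSupport.mul_right
    exact hχsupp.comp_left (g := fun x : ℝ => x^2) (by simp)
  have hI2 : Integrable (fun t => t * (χ t ^ 2 * g2 t)) := by
    apply Continuous.integrable_of_hasCompactSupport (by fun_prop)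
    apply HasCompactSupport.mul_left
    apply HasCompactSupport.mul_right
    exact hχsupp.comp_left (g := fun x : ℝ => x^2) (by simp)
  have hχ'supp : HasCompactSupport χ' := by
    have : χ' = deriv χ := by ext t; exact (hχd t).deriv.symm
    rw [this]; exact hχsupp.deriv
  have hI3 : Integrable (fun t => χ' t ^ 2 * g2 t) := by
    apply Continuous.integrable_of_hasCompactSupport (by fun_prop)
    apply HasCompactSupport.mul_right
    exact hχ'supp.comp_left (g := fun x : ℝ => x^2) (by simp)
  set k : ℝ → ℝ := fun t => -t * (χ t ^ 2 * g2 t) with hk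
  have hkd : ∀ t, HasDerivAt k (-χ t ^ 2 * g2 t - 2 * t * χ t * χ' t * g2 t
      + 2 * t ^ 2 * χ t ^ 2 * g2 t) t := by
    intro t
    have hg2d : HasDerivAt g2 (-2 * t * g2 t) t := by
      have h1 : HasDerivAt (fun t : ℝ => -1 * t ^ 2) (-2 * t) t := by
        have := ((hasDerivAt_pow 2 t).const_mul (-1))
        convert! this using 1
        simp
      convert! h1.exp using 1
      ring
    convert! ((hasDerivAt_id t).neg).mul (((hχd t).pow 2).mul hg2d) using 1
    simp; ring
  have hks : ContDiff ℝ (⊤ : ℕ∞) k := by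
    apply ContDiff.mul (by fun_prop)
    apply ContDiff.mul (hχs.pow 2)
    fun_prop
  have hkc : HasCompactSupport k := by
    apply HasCompactSupport.mul_left
    apply HasCompactSupport.mul_right
    exact hχsupp.comp_left (g := fun x : ℝ => x^2) (by simp)
  have hk0 : ∫ t in Ioi (0:ℝ), deriv k t = 0 := by
    rw [HasCompactSupport.integral_Ioi_deriv_eq (hks.of_le (by simp)) hkc]
    simp [hk]
  have hki : Integrable (deriv k) :=
    (hks.continuous_deriv (by simp)).integrable_of_hasCompactSupport hkc.deriv
  have hN : N1 f = ∫ t in Ioi (0:ℝ), χ t ^ 2 * g2 t := by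
    unfold N1; simp only [hfn]
  have hQ : ∀ ξ, Q1 ξ f = (∫ t in Ioi (0:ℝ), χ' t ^ 2 * g2 t)
      + (1 + ξ ^ 2) * (∫ t in Ioi (0:ℝ), χ t ^ 2 * g2 t)
      - 2 * ξ * ∫ t in Ioi (0:ℝ), t * (χ t ^ 2 * g2 t) := by
    intro ξ
    have e : ∀ t, ‖deriv f t‖ ^ 2 + (t - ξ) ^ 2 * ‖f t‖ ^ 2 =
      χ' t ^ 2 * g2 t + (1 + ξ ^ 2) * (χ t ^ 2 * g2 t) - 2 * ξ * (t * (χ t ^ 2 * g2 t))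
        + deriv k t := by
      intro t
      rw [hfd, hfn, (hkd t).deriv]; ring
    unfold Q1
    simp only [e]
    rw [integral_add, integral_sub, integral_add, hk0, integral_const_mul, integral_const_mul,
      add_zero]
    · exact hI3.integrableOn
    · exact (hI1.const_mul _).integrableOn
    · exact (hI3.add (hI1.const_mul _)).integrableOn
    · exact (hI2.const_mul _).integrableOn
    · exact ((hI3.add (hI1.const_mul _)).sub (hI2.const_mul _)).integrableOn
    · exact hki.integrableOn
  have hχ1 : ∀ t ∈ Ioc (0:ℝ) 1, χ t = 1 := by
    intro t ht
    apply cut_eq_one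
    rw [abs_div, abs_of_pos hn0, abs_of_pos ht.1, div_le_one hn0]
    linarith [ht.2]
  have b1 : (∫ t in Ioi (0:ℝ), χ' t ^ 2 * g2 t) ≤ M ^ 2 / n ^ 2 * G := by
    rw [hG, ← integral_const_mul]
    apply setIntegral_mono hI3.integrableOn (hg2i.const_mul _).integrableOn
    intro t
    have : χ' t ^ 2 ≤ M ^ 2 / n ^ 2 := by
      rw [hχ']; simp only [div_pow]
      apply div_le_div_of_nonneg_right _ (by positivity)
      rw [← sq_abs]
      exact pow_le_pow_left₀ (abs_nonneg _) (hM _) 2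
    exact mul_le_mul_of_nonneg_right this (Real.exp_pos _).le
  have b2 : (∫ t in Ioi (0:ℝ), χ t ^ 2 * g2 t) ≤ G := by
    rw [hG]
    apply setIntegral_mono hI1.integrableOn hg2i.integrableOn
    intro t
    have : χ t ^ 2 ≤ 1 := pow_le_one₀ (cut_nonneg _) (cut_le_one _)
    simpa using mul_le_mul_of_nonneg_right this (Real.exp_pos (-1 * t^2)).le
  have b3 : m ≤ ∫ t in Ioi (0:ℝ), t * (χ t ^ 2 * g2 t) := by
    have : m = ∫ t in Ioc (0:ℝ) 1, t * (χ t ^ 2 * g2 t) := by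
      rw [hm]
      apply setIntegral_congr_fun measurableSet_Ioc
      intro t ht
      simp [hχ1 t ht]
    rw [this]
    apply setIntegral_mono_set hI2.integrableOn
    · filter_upwards [ae_restrict_mem measurableSet_Ioi] with t ht
      exact mul_nonneg (le_of_lt ht) (mul_nonneg (sq_nonneg _) (Real.exp_pos _).le)
    · exact Ioc_subset_Ioi_self.eventuallyLE
  have hNpos : 0 < N1 f := by
    rw [hN]
    have : m ≤ ∫ t in Ioc (0:ℝ) 1, χ t ^ 2 * g2 t := by
      rw [hm]
      apply setIntegral_mono_on hmi hI1.integrableOn measurableSet_Ioc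
      intro t ht
      rw [hχ1 t ht, one_pow]
      exact mul_le_mul_of_nonneg_right ht.2 (Real.exp_pos _).le
    refine lt_of_lt_of_le hmpos (this.trans ?_)
    apply setIntegral_mono_set hI1.integrableOn
    · exact ae_of_all _ fun t => mul_nonneg (sq_nonneg _) (Real.exp_pos _).le
    · exact Ioc_subset_Ioi_self.eventuallyLE
  refine ⟨m / G, f, hfs, hfc, hNpos, ?_⟩
  rw [hQ, hN]
  have hξ : 0 < m / G := div_pos hmpos hGpos
  have key : M ^ 2 / n ^ 2 * G + (m / G) ^ 2 * G - 2 * (m / G) * m < 0 := by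
    have h1 : (m / G) ^ 2 * G - 2 * (m / G) * m = - (m ^ 2 / G) := by field_simp; ring
    have h2 : M ^ 2 / n ^ 2 * G < m ^ 2 / G := by
      rw [div_lt_iff₀ (by positivity)] at hn2
      rw [lt_div_iff₀ hGpos, div_mul_eq_mul_div, div_mul_eq_mul_div, div_lt_iff₀ (by positivity)]
      have : (n:ℝ) ≤ n ^ 2 := by nlinarith
      nlinarith [sq_nonneg m]
    linarith
  have h3 := mul_le_mul_of_nonneg_left b2 (sq_nonneg (m / G))
  have h4 := mul_le_mul_of_nonneg_left b3 (by positivity : 0 ≤ 2 * (m / G))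
  linarith

lemma Th_lt_one : Th < 1 := by
  obtain ⟨ξ, f, h1, h2, h3, h4⟩ := trial_exists
  refine lt_of_le_of_lt (csInf_le ThSet_bdd ⟨ξ, f, h1, h2, h3, rfl⟩) ?_
  rwa [div_lt_one h3]

lemma Th_approx {x : ℝ} (hx : Th < x) : ∃ (ξ : ℝ) (f : ℝ → ℂ), ContDiff ℝ (⊤ : ℕ∞) f ∧
    HasCompactSupport f ∧ 0 < N1 f ∧ Q1 ξ f < x * N1 f := by
  have hne : ThSet.Nonempty := by
    obtain ⟨ξ, f, h1, h2, h3, h4⟩ := trial_exists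
    exact ⟨_, ξ, f, h1, h2, h3, rfl⟩
  obtain ⟨r, ⟨ξ, f, h1, h2, h3, rfl⟩, hr⟩ := (csInf_lt_iff ThSet_bdd hne).1 hx
  exact ⟨ξ, f, h1, h2, h3, (div_lt_iff₀ h3).1 hr⟩

/-- scaled one-dimensional inequality -/
lemma Th_scaled (R η : ℝ) (hR : 0 ≤ R) (f : ℝ → ℂ) (hf : ContDiff ℝ (⊤ : ℕ∞) f)
    (hc : HasCompactSupport f) :
    R * Th * (∫ t in Ioi (0:ℝ), ‖f t‖ ^ 2) ≤
      ∫ t in Ioi (0:ℝ), (‖deriv f t‖ ^ 2 + (R * t + η) ^ 2 * ‖f t‖ ^ 2) := by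
  rcases hR.eq_or_lt with h | h
  · rw [← h]; simp only [zero_mul]
    exact integral_nonneg fun t => by positivity
  set c := Real.sqrt R with hcdef
  have hcpos : 0 < c := Real.sqrt_pos.2 h
  have hc2 : R = c ^ 2 := (Real.sq_sqrt hR).symm
  set g : ℝ → ℂ := fun y => f (c⁻¹ * y) with hg
  have hgs : ContDiff ℝ (⊤ : ℕ∞) g := hf.comp (by fun_prop)
  have hgc : HasCompactSupport g := by
    have := hc.comp_smul (c := c⁻¹) (by positivity)
    simpa [hg] using this
  have hgd : ∀ y, deriv g y = c⁻¹ • deriv f (c⁻¹ * y) := by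
    intro y
    exact deriv_comp_mul_left c⁻¹ f y
  have key := Th_mul_le (-η / c) g hgs hgc
  have e1 : N1 g = c * ∫ t in Ioi (0:ℝ), ‖f t‖ ^ 2 := by
    have := integral_comp_mul_left_Ioi (fun t => ‖f t‖ ^ 2) 0 (inv_pos.2 hcpos)
    simpa [N1, hg] using this
  have e2 : Q1 (-η / c) g = c * ∫ t in Ioi (0:ℝ), (c⁻¹ ^ 2 * (‖deriv f t‖ ^ 2 + (R * t + η) ^ 2 * ‖f t‖ ^ 2)) := by
    have := integral_comp_mul_left_Ioi (fun t => c⁻¹ ^ 2 * (‖deriv f t‖ ^ 2 + (R * t + η) ^ 2 * ‖f t‖ ^ 2)) 0 (inv_pos.2 hcpos)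
    simp only [mul_zero, inv_inv, smul_eq_mul] at this
    rw [← this]
    unfold Q1
    congr 1
    ext y
    rw [hgd, norm_smul, Real.norm_of_nonneg (by positivity), hc2]
    simp only [hg]
    field_simp
    ring
  rw [e1, e2, integral_const_mul] at key
  have k2 : c * (Th * (c * ∫ t in Ioi (0:ℝ), ‖f t‖ ^ 2)) ≤ c * (c * (c⁻¹ ^ 2 * ∫ t in Ioi (0:ℝ), (‖deriv f t‖ ^ 2 + (R * t + η) ^ 2 * ‖f t‖ ^ 2))) :=
    mul_le_mul_of_nonneg_left key hcpos.le
  have e3 : ∀ X : ℝ, c * (c * (c⁻¹ ^ 2 * X)) = X := by intro X; field_simp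
  rw [e3] at k2
  calc _ = c * (Th * (c * ∫ t in Ioi (0:ℝ), ‖f t‖ ^ 2)) := by rw [hc2]; ring
    _ ≤ _ := k2

end MagWedge

namespace MagWedge

open scoped FourierTransform Convolution

lemma cd_ofReal {E : Type*} [NormedAddCommGroup E] [NormedSpace ℝ E] {f : E → ℝ}
    (hf : ContDiff ℝ (⊤ : ℕ∞) f) : ContDiff ℝ (⊤ : ℕ∞) (fun x => (f x : ℂ)) :=
  Complex.ofRealCLM.contDiff.comp hf

/-- partial derivative in the first variable -/
def pd1 (h : ℝ × ℝ → ℂ) (x : ℝ × ℝ) : ℂ := fderiv ℝ h x (1, 0)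
/-- partial derivative in the second variable -/
def pd2 (h : ℝ × ℝ → ℂ) (x : ℝ × ℝ) : ℂ := fderiv ℝ h x (0, 1)

lemma pd1_contDiff {h : ℝ × ℝ → ℂ} (hs : ContDiff ℝ (⊤ : ℕ∞) h) : ContDiff ℝ (⊤ : ℕ∞) (pd1 h) :=
  (hs.fderiv_right (m := (⊤ : ℕ∞)) (by simp)).clm_apply contDiff_const

lemma pd2_contDiff {h : ℝ × ℝ → ℂ} (hs : ContDiff ℝ (⊤ : ℕ∞) h) : ContDiff ℝ (⊤ : ℕ∞) (pd2 h) :=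
  (hs.fderiv_right (m := (⊤ : ℕ∞)) (by simp)).clm_apply contDiff_const

lemma pd1_compact {h : ℝ × ℝ → ℂ} (hc : HasCompactSupport h) : HasCompactSupport (pd1 h) :=
  hc.fderiv_apply (𝕜 := ℝ) (1, 0)

lemma pd2_compact {h : ℝ × ℝ → ℂ} (hc : HasCompactSupport h) : HasCompactSupport (pd2 h) :=
  hc.fderiv_apply (𝕜 := ℝ) (0, 1)

lemma pd1_hasDerivAt {h : ℝ × ℝ → ℂ} (hs : ContDiff ℝ (⊤ : ℕ∞) h) (s t : ℝ) :
    HasDerivAt (fun s => h (s, t)) (pd1 h (s, t)) s := by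
  have h1 := ((hs.differentiable (by simp)) (s, t)).hasFDerivAt
  have h2 : HasDerivAt (fun s : ℝ => (s, t)) (1, 0) s :=
    (hasDerivAt_id s).prodMk (hasDerivAt_const s t)
  exact h1.comp_hasDerivAt s h2

lemma pd2_hasDerivAt {h : ℝ × ℝ → ℂ} (hs : ContDiff ℝ (⊤ : ℕ∞) h) (s t : ℝ) :
    HasDerivAt (fun t => h (s, t)) (pd2 h (s, t)) t := by
  have h1 := ((hs.differentiable (by simp)) (s, t)).hasFDerivAt
  have h2 : HasDerivAt (fun t : ℝ => (s, t)) (0, 1) t :=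
    (hasDerivAt_const t s).prodMk (hasDerivAt_id t)
  exact h1.comp_hasDerivAt t h2

lemma box_of_compact {h : ℝ × ℝ → ℂ} (hc : HasCompactSupport h) :
    ∃ A : ℝ, ∀ s t : ℝ, (s ∉ Icc (-A) A ∨ t ∉ Icc (-A) A) → h (s, t) = 0 := by
  obtain ⟨A, hA⟩ := hc.isCompact.isBounded.subset_closedBall 0
  refine ⟨A, fun s t hst => ?_⟩
  by_contra hne
  have : (s, t) ∈ Metric.closedBall (0 : ℝ × ℝ) A := hA (subset_tsupport _ hne)
  rw [mem_closedBall_zero_iff, Prod.norm_def, sup_le_iff] at this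
  simp only [Real.norm_eq_abs, abs_le] at this
  rcases hst with h | h
  · exact h this.1
  · exact h this.2

lemma slice1_compact {h : ℝ × ℝ → ℂ} (hc : HasCompactSupport h) (t : ℝ) :
    HasCompactSupport (fun s => h (s, t)) := by
  obtain ⟨A, hA⟩ := box_of_compact hc
  exact HasCompactSupport.intro (isCompact_Icc (a := -A) (b := A)) fun s hs => hA s t (Or.inl hs)

lemma slice2_compact {h : ℝ × ℝ → ℂ} (hc : HasCompactSupport h) (s : ℝ) :
    HasCompactSupport (fun t => h (s, t)) := by
  obtain ⟨A, hA⟩ := box_of_compact hc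
  exact HasCompactSupport.intro (isCompact_Icc (a := -A) (b := A)) fun t ht => hA s t (Or.inr ht)

lemma slice1_contDiff {h : ℝ × ℝ → ℂ} (hs : ContDiff ℝ (⊤ : ℕ∞) h) (t : ℝ) :
    ContDiff ℝ (⊤ : ℕ∞) (fun s => h (s, t)) := hs.comp (by fun_prop)

lemma slice2_contDiff {h : ℝ × ℝ → ℂ} (hs : ContDiff ℝ (⊤ : ℕ∞) h) (s : ℝ) :
    ContDiff ℝ (⊤ : ℕ∞) (fun t => h (s, t)) := hs.comp (by fun_prop)

/-- partial Fourier transform in the first variable -/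
def HF (h : ℝ × ℝ → ℂ) (p : ℝ × ℝ) : ℂ := 𝓕 (fun s => h (s, p.2)) p.1

lemma HF_eq (h : ℝ × ℝ → ℂ) (p : ℝ × ℝ) :
    HF h p = ∫ v : ℝ, Complex.exp (↑(-2 * π * v * p.1) * Complex.I) * h (v, p.2) := by
  unfold HF
  rw [fourier_real_eq_integral_exp_smul]
  rfl

lemma HF_contDiff {h : ℝ × ℝ → ℂ} (hs : ContDiff ℝ (⊤ : ℕ∞) h) (hc : HasCompactSupport h) :
    ContDiff ℝ (⊤ : ℕ∞) (HF h) := by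
  obtain ⟨A, hA⟩ := box_of_compact hc
  let g : ℝ × ℝ → ℝ → ℂ := fun p z =>
    Complex.exp (↑(-2 * π * (-z) * p.1) * Complex.I) * h (-z, p.2)
  have hg : ContDiff ℝ (⊤ : ℕ∞) ↿g := by
    apply ContDiff.mul
    · apply ContDiff.cexp
      apply ContDiff.mul _ contDiff_const
      exact cd_ofReal (f := fun q : (ℝ × ℝ) × ℝ => -2 * π * (-q.2) * q.1.1) (by fun_prop)
    · apply hs.comp
      fun_prop
  have := contDiffOn_convolution_right_with_param (μ := volume) (f := fun _ : ℝ => (1:ℂ))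
    (n := (⊤ : ℕ∞)) (ContinuousLinearMap.mul ℝ ℂ) (g := g) (s := univ) (k := Icc (-A) A) isOpen_univ
    isCompact_Icc (by
      intro p x _ hx
      simp only [g]
      rw [hA (-x) p.2, mul_zero]
      left
      intro h; apply hx
      exact ⟨by linarith [h.2], by linarith [h.1]⟩) (locallyIntegrable_const _)
      hg.contDiffOn
  rw [univ_prod_univ, contDiffOn_univ] at this
  have h2 : HF h = (fun q : (ℝ × ℝ) × ℝ => ((fun _ : ℝ => (1:ℂ)) ⋆[ContinuousLinearMap.mul ℝ ℂ, volume] g q.1) q.2) ∘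
      (fun p : ℝ × ℝ => (p, (0:ℝ))) := by
    ext p
    rw [HF_eq]
    simp [convolution, g]
  rw [h2]
  exact this.comp (by fun_prop)

lemma norm_cexp_I (x : ℝ) : ‖Complex.exp (↑x * Complex.I)‖ = 1 := Complex.norm_exp_ofReal_mul_I x

lemma HF_hasDerivAt {h : ℝ × ℝ → ℂ} (hs : ContDiff ℝ (⊤ : ℕ∞) h) (hc : HasCompactSupport h)
    (ξ t : ℝ) : HasDerivAt (fun t => HF h (ξ, t)) (HF (pd2 h) (ξ, t)) t := by
  obtain ⟨A, hA⟩ := box_of_compact (pd2_compact hc)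
  obtain ⟨M, hM⟩ := (pd2_contDiff hs).continuous.bounded_above_of_compact_support (pd2_compact hc)
  simp only [HF_eq]
  have hcont := hs.continuous
  have hcont2 := (pd2_contDiff hs).continuous
  refine (hasDerivAt_integral_of_dominated_loc_of_deriv_le (𝕜 := ℝ) (μ := volume) (x₀ := t)
    (F := fun t v => Complex.exp (↑(-2 * π * v * ξ) * Complex.I) * h (v, t))
    (F' := fun t v => Complex.exp (↑(-2 * π * v * ξ) * Complex.I) * pd2 h (v, t))
    (s := univ) (bound := (Icc (-A) A).indicator fun _ => M) univ_mem ?_ ?_ ?_ ?_ ?_ ?_).2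
  · refine Eventually.of_forall fun t => Continuous.aestronglyMeasurable ?_
    fun_prop
  · apply Continuous.integrable_of_hasCompactSupport (by fun_prop)
    exact (slice1_compact hc t).mul_left
  · apply Continuous.aestronglyMeasurable
    fun_prop
  · refine ae_of_all _ fun s t _ => ?_
    rw [norm_mul, norm_cexp_I, one_mul]
    by_cases hsA : s ∈ Icc (-A) A
    · rw [indicator_of_mem hsA]; exact hM _
    · rw [indicator_of_notMem hsA, hA _ _ (Or.inl hsA), norm_zero]
  · rw [integrable_indicator_iff measurableSet_Icc]
    exact integrableOn_const (by simp)
  · refine ae_of_all _ fun s t _ => ?_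
    exact (pd2_hasDerivAt hs s t).const_mul _

lemma HF_plancherel {h : ℝ × ℝ → ℂ} (hs : ContDiff ℝ (⊤ : ℕ∞) h) (hc : HasCompactSupport h)
    (t : ℝ) : Integrable (fun ξ => ‖HF h (ξ, t)‖ ^ 2) ∧
      ∫ ξ, ‖HF h (ξ, t)‖ ^ 2 = ∫ s, ‖h (s, t)‖ ^ 2 := by
  let φ := (slice1_compact hc t).toSchwartzMap (slice1_contDiff hs t)
  constructor
  · have h1 : MemLp (𝓕 φ : SchwartzMap ℝ ℂ) 2 volume := SchwartzMap.memLp _ 2 volume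
    have := h1.integrable_norm_pow (by norm_num)
    exact this
  · have := SchwartzMap.integral_norm_sq_fourier φ
    exact this

lemma integrable_sq {h : ℝ × ℝ → ℂ} (hs : Continuous h) (hc : HasCompactSupport h) :
    Integrable (fun p => ‖h p‖ ^ 2) := by
  apply Continuous.integrable_of_hasCompactSupport (by fun_prop)
  exact hc.comp_left (g := fun z : ℂ => ‖z‖ ^ 2) (by simp)

/-- measure on the half plane -/
abbrev hpm : Measure (ℝ × ℝ) := (volume : Measure ℝ).prod (volume.restrict (Ioi (0:ℝ)))

lemma hpm_eq : hpm = (volume : Measure (ℝ × ℝ)).restrict (univ ×ˢ Ioi (0:ℝ)) := by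
  rw [Measure.volume_eq_prod, ← Measure.prod_restrict, Measure.restrict_univ]

lemma integrable_hpm {f : ℝ × ℝ → ℝ} (hf : Integrable f) : Integrable f hpm := by
  rw [hpm_eq]; exact hf.integrableOn

lemma planch2 {h : ℝ × ℝ → ℂ} (hs : ContDiff ℝ (⊤ : ℕ∞) h) (hc : HasCompactSupport h) :
    Integrable (fun p => ‖HF h p‖ ^ 2) hpm ∧ ∫ p, ‖HF h p‖ ^ 2 ∂hpm = ∫ p, ‖h p‖ ^ 2 ∂hpm := by
  have hi := integrable_hpm (integrable_sq hs.continuous hc)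
  have h1 : Integrable (fun p => ‖HF h p‖ ^ 2) hpm := by
    have hcont := (HF_contDiff hs hc).continuous
    rw [integrable_prod_iff' (Continuous.aestronglyMeasurable (by fun_prop))]
    refine ⟨ae_of_all _ fun t => (HF_plancherel hs hc t).1, ?_⟩
    have := hi.integral_prod_right
    refine this.congr (ae_of_all _ fun t => ?_)
    simp only [norm_pow, norm_norm]
    exact (HF_plancherel hs hc t).2.symm
  refine ⟨h1, ?_⟩
  rw [integral_prod_symm _ h1, integral_prod_symm _ hi]
  congr 1
  ext t
  exact (HF_plancherel hs hc t).2

lemma HF_symbol {h : ℝ × ℝ → ℂ} (hs : ContDiff ℝ (⊤ : ℕ∞) h) (hc : HasCompactSupport h)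
    (b R ξ t : ℝ) :
    HF (fun p => -Complex.I * b * pd1 h p + ((R * p.2 : ℝ) : ℂ) * h p) (ξ, t) =
      ((R * t + 2 * π * b * ξ : ℝ) : ℂ) * HF h (ξ, t) := by
  have hd : HF (pd1 h) (ξ, t) = (2 * π * Complex.I * ξ) * HF h (ξ, t) := by
    have hder : deriv (fun s => h (s, t)) = fun s => pd1 h (s, t) := by
      ext s; exact (pd1_hasDerivAt hs s t).deriv
    have h0 := Real.fourier_deriv (f := fun s => h (s, t))
      ((slice1_contDiff hs t).continuous.integrable_of_hasCompactSupport (slice1_compact hc t))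
      ((slice1_contDiff hs t).differentiable (by simp)) (by
        rw [hder]
        exact (slice1_contDiff (pd1_contDiff hs) t).continuous.integrable_of_hasCompactSupport
          (slice1_compact (pd1_compact hc) t))
    rw [hder] at h0
    exact congrFun h0 ξ
  have hI : ∀ k : ℝ × ℝ → ℂ, Continuous k → HasCompactSupport k → Integrable
      (fun v : ℝ => Complex.exp (↑(-2 * π * v * ξ) * Complex.I) * k (v, t)) := by
    intro k hk hkc
    apply Continuous.integrable_of_hasCompactSupport (by fun_prop)
    exact (slice1_compact hkc t).mul_left
  have : HF (fun p => -Complex.I * b * pd1 h p + ((R * p.2 : ℝ) : ℂ) * h p) (ξ, t) =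
      -Complex.I * b * HF (pd1 h) (ξ, t) + ((R * t : ℝ) : ℂ) * HF h (ξ, t) := by
    simp only [HF_eq]
    rw [← integral_const_mul, ← integral_const_mul, ← integral_add]
    · congr 1; ext v; ring
    · exact (hI _ (pd1_contDiff hs).continuous (pd1_compact hc)).const_mul _
    · exact (hI _ hs.continuous hc).const_mul _
  rw [this, hd]
  push_cast
  have := Complex.I_mul_I
  linear_combination (-(b:ℂ) * 2 * π * ξ * HF h (ξ,t)) * this

lemma symbol_contDiff {h : ℝ × ℝ → ℂ} (hs : ContDiff ℝ (⊤ : ℕ∞) h) (b R : ℝ) :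
    ContDiff ℝ (⊤ : ℕ∞) (fun p : ℝ × ℝ => -Complex.I * b * pd1 h p + ((R * p.2 : ℝ) : ℂ) * h p) := by
  apply ContDiff.add (contDiff_const.mul (pd1_contDiff hs))
  apply ContDiff.mul _ hs
  exact cd_ofReal (f := fun p : ℝ × ℝ => R * p.2) (by fun_prop)

lemma fourier_hp {h : ℝ × ℝ → ℂ} (hs : ContDiff ℝ (⊤ : ℕ∞) h) (hc : HasCompactSupport h)
    (b R : ℝ) (hR : 0 ≤ R) :
    R * Th * ∫ p, ‖h p‖ ^ 2 ∂hpm ≤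
      ∫ p, (‖pd2 h p‖ ^ 2 + ‖-Complex.I * b * pd1 h p + ((R * p.2 : ℝ) : ℂ) * h p‖ ^ 2) ∂hpm := by
  have hws := symbol_contDiff hs b R
  have hwc : HasCompactSupport
      (fun p : ℝ × ℝ => -Complex.I * b * pd1 h p + ((R * p.2 : ℝ) : ℂ) * h p) :=
    (pd1_compact hc).mul_left.add hc.mul_left
  obtain ⟨i1, e1⟩ := planch2 hs hc
  obtain ⟨i2, e2⟩ := planch2 (pd2_contDiff hs) (pd2_compact hc)
  obtain ⟨i3, e3⟩ := planch2 hws hwc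
  rw [integral_add (integrable_hpm (integrable_sq (pd2_contDiff hs).continuous (pd2_compact hc)))
    (integrable_hpm (integrable_sq hws.continuous hwc)), ← e1, ← e2, ← e3, ← integral_add i2 i3,
    ← integral_const_mul, integral_prod _ (i1.const_mul _), integral_prod (μ := volume) (ν := volume.restrict (Ioi (0:ℝ))) (fun p => _ + _) (i2.add i3)]
  apply integral_mono ((i1.const_mul _).integral_prod_left) ((i2.add i3).integral_prod_left)
  intro ξ
  simp only [Pi.add_apply]
  rw [integral_const_mul]
  have hder : ∀ t, deriv (fun t => HF h (ξ, t)) t = HF (pd2 h) (ξ, t) := fun t =>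
    (HF_hasDerivAt hs hc ξ t).deriv
  have hcomp : HasCompactSupport (fun t => HF h (ξ, t)) := by
    obtain ⟨A, hA⟩ := box_of_compact hc
    refine HasCompactSupport.intro (isCompact_Icc (a := -A) (b := A)) fun t ht => ?_
    rw [HF_eq]
    simp [hA _ t (Or.inr ht)]
  have := Th_scaled R (2 * π * b * ξ) hR (fun t => HF h (ξ, t)) (slice2_contDiff (HF_contDiff hs hc) ξ) hcomp
  refine this.trans (le_of_eq ?_)
  congr 1
  ext t
  rw [hder, HF_symbol hs hc, norm_mul, Complex.norm_real, mul_pow, Real.norm_eq_abs, sq_abs]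

/-- The case without derivative. -/
lemma slice_hp {h : ℝ × ℝ → ℂ} (hs : ContDiff ℝ (⊤ : ℕ∞) h) (hc : HasCompactSupport h)
    (R : ℝ) (hR : 0 ≤ R) (η : ℝ → ℝ) (hη : Continuous η) :
    R * Th * ∫ p, ‖h p‖ ^ 2 ∂hpm ≤
      ∫ p, (‖pd2 h p‖ ^ 2 + ‖((R * p.2 + η p.1 : ℝ) : ℂ) * h p‖ ^ 2) ∂hpm := by
  have hcont := hs.continuous
  have i1 := integrable_hpm (integrable_sq hs.continuous hc)
  have i2 := integrable_hpm (integrable_sq (pd2_contDiff hs).continuous (pd2_compact hc))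
  have i3 := integrable_hpm (integrable_sq (h := fun p => ((R * p.2 + η p.1 : ℝ) : ℂ) * h p)
    (by fun_prop) hc.mul_left)
  rw [← integral_const_mul, integral_prod _ (i1.const_mul _), integral_prod (μ := volume) (ν := volume.restrict (Ioi (0:ℝ))) (fun p => _ + _) (i2.add i3)]
  apply integral_mono ((i1.const_mul _).integral_prod_left) ((i2.add i3).integral_prod_left)
  intro s
  simp only [Pi.add_apply]
  rw [integral_const_mul]
  have := Th_scaled R (η s) hR (fun t => h (s, t)) (slice2_contDiff hs s) (slice2_compact hc s)
  refine this.trans (le_of_eq ?_)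
  congr 1
  ext t
  rw [(pd2_hasDerivAt hs s t).deriv, norm_mul, Complex.norm_real, mul_pow, Real.norm_eq_abs, sq_abs]

end MagWedge

namespace MagWedge

lemma alg_ineq (b p q x y u v : ℝ) (hn : b ^ 2 + p ^ 2 + q ^ 2 = 1) :
    (b * x + q * u) ^ 2 + (b * y + q * v) ^ 2 + 2 * p * (y * u - x * v) ≤
      x ^ 2 + y ^ 2 + (u ^ 2 + v ^ 2) := by
  by_cases h : p ^ 2 + q ^ 2 = 0
  · have hp : p = 0 := by nlinarith [sq_nonneg p, sq_nonneg q]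
    have hq : q = 0 := by nlinarith [sq_nonneg p, sq_nonneg q]
    subst hp hq
    have hb : b ^ 2 = 1 := by linarith
    nlinarith [sq_nonneg u, sq_nonneg v]
  · have hpos : 0 < p ^ 2 + q ^ 2 := lt_of_le_of_ne (by positivity) (Ne.symm h)
    have key : (p ^ 2 + q ^ 2) * (x ^ 2 + y ^ 2 + (u ^ 2 + v ^ 2) - ((b * x + q * u) ^ 2 + (b * y + q * v) ^ 2 + 2 * p * (y * u - x * v))) =
      ((p ^ 2 + q ^ 2) * x - b * q * u + p * v) ^ 2 + ((p ^ 2 + q ^ 2) * y - b * q * v - p * u) ^ 2 := by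
      have hb : b ^ 2 = 1 - p ^ 2 - q ^ 2 := by linarith
      ring_nf
      simp only [hb]
      ring
    by_contra hcon
    push Not at hcon
    nlinarith [sq_nonneg ((p ^ 2 + q ^ 2) * x - b * q * u + p * v), sq_nonneg ((p ^ 2 + q ^ 2) * y - b * q * v - p * u)]

lemma sq_norm_re_im (z : ℂ) : ‖z‖ ^ 2 = z.re ^ 2 + z.im ^ 2 := by
  rw [← Complex.normSq_eq_norm_sq, Complex.normSq_apply]; ring

lemma pointwise_hp (b p q β V : ℝ) (hn : b ^ 2 + p ^ 2 + q ^ 2 = 1) (a h : ℂ) :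
    ‖-Complex.I * b * a + ((b * β + q * V : ℝ) : ℂ) * h‖ ^ 2
      - 2 * p * V * (a.re * h.re + a.im * h.im) ≤
    ‖-Complex.I * a + ((β : ℝ) : ℂ) * h‖ ^ 2 + V ^ 2 * ‖h‖ ^ 2 := by
  have := alg_ineq b p q (a.im + β * h.re) (-a.re + β * h.im) (V * h.re) (V * h.im) hn
  simp only [sq_norm_re_im, Complex.add_re, Complex.add_im, Complex.mul_re, Complex.mul_im,
    Complex.neg_re, Complex.neg_im, Complex.I_re, Complex.I_im, Complex.ofReal_re,
    Complex.ofReal_im]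
  ring_nf at this ⊢
  linarith

/-- integration by parts -/
lemma ibp_hp {h : ℝ × ℝ → ℂ} (hs : ContDiff ℝ (⊤ : ℕ∞) h) (hc : HasCompactSupport h) (p q τ : ℝ) :
    ∫ x, (p * x.1 + q * x.2 - τ) * ((pd1 h x).re * (h x).re + (pd1 h x).im * (h x).im) ∂hpm
      = - (p / 2) * ∫ x, ‖h x‖ ^ 2 ∂hpm := by
  have hcont := hs.continuous
  have hcont1 := (pd1_contDiff hs).continuous
  have i1 := integrable_hpm (integrable_sq hs.continuous hc)
  have i2' : Integrable (fun x : ℝ × ℝ => (p * x.1 + q * x.2 - τ) * ((pd1 h x).re * (h x).re + (pd1 h x).im * (h x).im)) := by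
    apply Continuous.integrable_of_hasCompactSupport
    · have := Complex.continuous_re.comp hcont
      have := Complex.continuous_im.comp hcont
      have := Complex.continuous_re.comp hcont1
      have := Complex.continuous_im.comp hcont1
      fun_prop
    · apply HasCompactSupport.mul_left
      refine HasCompactSupport.intro hc.isCompact fun x hx => ?_
      rw [image_eq_zero_of_notMem_tsupport hx]; simp
  have i2 := integrable_hpm i2'
  rw [integral_prod_symm _ i1, integral_prod_symm _ i2, ← integral_const_mul]
  congr 1
  ext t
  have hd : ∀ s, HasDerivAt (fun s => (p * s + q * t - τ) * ((h (s,t)).re ^ 2 + (h (s,t)).im ^ 2))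
      (p * ‖h (s,t)‖ ^ 2 + 2 * ((p * s + q * t - τ) * ((pd1 h (s,t)).re * (h (s,t)).re + (pd1 h (s,t)).im * (h (s,t)).im))) s := by
    intro s
    have h1 := pd1_hasDerivAt hs s t
    have hre : HasDerivAt (fun s => (h (s,t)).re) (pd1 h (s,t)).re s :=
      Complex.reCLM.hasFDerivAt.comp_hasDerivAt s h1
    have him : HasDerivAt (fun s => (h (s,t)).im) (pd1 h (s,t)).im s :=
      Complex.imCLM.hasFDerivAt.comp_hasDerivAt s h1
    have hl : HasDerivAt (fun s : ℝ => p * s + q * t - τ) p s := by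
      simpa using (((hasDerivAt_id s).const_mul p).add_const (q * t)).sub_const τ
    convert! hl.mul ((hre.pow 2).add (him.pow 2)) using 1
    rw [sq_norm_re_im]
    simp; ring
  have j1 : Integrable (fun s => ‖h (s,t)‖ ^ 2) := by
    apply Continuous.integrable_of_hasCompactSupport (by fun_prop)
    exact (slice1_compact hc t).comp_left (g := fun z : ℂ => ‖z‖ ^ 2) (by simp)
  have j2 : Integrable (fun s : ℝ => (p * s + q * t - τ) * ((pd1 h (s,t)).re * (h (s,t)).re + (pd1 h (s,t)).im * (h (s,t)).im)) := by
    apply Continuous.integrable_of_hasCompactSupport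
    · have := Complex.continuous_re.comp hcont
      have := Complex.continuous_im.comp hcont
      have := Complex.continuous_re.comp hcont1
      have := Complex.continuous_im.comp hcont1
      fun_prop
    · apply HasCompactSupport.mul_left
      refine HasCompactSupport.intro (slice1_compact hc t).isCompact fun x hx => ?_
      have : h (x, t) = 0 := image_eq_zero_of_notMem_tsupport (f := fun s => h (s,t)) hx
      rw [this]; simp
  have j3 : Integrable (fun s => (p * s + q * t - τ) * ((h (s,t)).re ^ 2 + (h (s,t)).im ^ 2)) := by
    apply Continuous.integrable_of_hasCompactSupport
    · have := Complex.continuous_re.comp hcont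
      have := Complex.continuous_im.comp hcont
      fun_prop
    · apply HasCompactSupport.mul_left
      refine HasCompactSupport.intro (slice1_compact hc t).isCompact fun x hx => ?_
      have : h (x, t) = 0 := image_eq_zero_of_notMem_tsupport (f := fun s => h (s,t)) hx
      rw [this]; simp
  have h0 := integral_eq_zero_of_hasDerivAt_of_integrable hd ((j1.const_mul p).add (j2.const_mul 2)) j3
  rw [integral_add (j1.const_mul p) (j2.const_mul 2), integral_const_mul, integral_const_mul] at h0
  linarith

/-- normal form density -/
def ndens (b p q τ κ1 κ2 : ℝ) (h : ℝ × ℝ → ℂ) (x : ℝ × ℝ) : ℝ :=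
  ‖-Complex.I * pd1 h x + ((b * x.2 + κ1 + κ2 * x.1 : ℝ) : ℂ) * h x‖ ^ 2 + ‖pd2 h x‖ ^ 2
    + (p * x.1 + q * x.2 - τ) ^ 2 * ‖h x‖ ^ 2

lemma integrable_ndens {h : ℝ × ℝ → ℂ} (hs : ContDiff ℝ (⊤ : ℕ∞) h) (hc : HasCompactSupport h)
    (b p q τ κ1 κ2 : ℝ) : Integrable (ndens b p q τ κ1 κ2 h) := by
  have hcont := hs.continuous
  have hcont1 := (pd1_contDiff hs).continuous
  have hcont2 := (pd2_contDiff hs).continuous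
  have i1 := integrable_sq (h := fun x : ℝ × ℝ => -Complex.I * pd1 h x + ((b * x.2 + κ1 + κ2 * x.1 : ℝ) : ℂ) * h x)
    (by fun_prop) ((pd1_compact hc).mul_left.add hc.mul_left)
  have i2 := integrable_sq hcont2 (pd2_compact hc)
  refine (i1.add i2).add ?_
  apply Continuous.integrable_of_hasCompactSupport (by fun_prop)
  exact (hc.comp_left (g := fun z : ℂ => ‖z‖ ^ 2) (by simp)).mul_left

lemma hp_bound {h : ℝ × ℝ → ℂ} (hs : ContDiff ℝ (⊤ : ℕ∞) h) (hc : HasCompactSupport h)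
    (b p q τ κ1 κ2 : ℝ) (hn : b ^ 2 + p ^ 2 + q ^ 2 = 1)
    (hk : b = 0 ∨ (b * κ1 = q * τ ∧ b * κ2 = - (q * p))) :
    ((b ^ 2 + q ^ 2) * Th + p ^ 2) * ∫ x, ‖h x‖ ^ 2 ∂hpm ≤ ∫ x, ndens b p q τ κ1 κ2 h x ∂hpm := by
  have hcont := hs.continuous
  have hcont1 := (pd1_contDiff hs).continuous
  have hcont2 := (pd2_contDiff hs).continuous
  set W : ℝ × ℝ → ℂ := fun x => -Complex.I * b * pd1 h x +
    ((b * (b * x.2 + κ1 + κ2 * x.1) + q * (p * x.1 + q * x.2 - τ) : ℝ) : ℂ) * h x with hW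
  have hWc : HasCompactSupport W := (pd1_compact hc).mul_left.add hc.mul_left
  have iW := integrable_hpm (integrable_sq (h := W) (by fun_prop) hWc)
  have i2 := integrable_hpm (integrable_sq hcont2 (pd2_compact hc))
  have i3 : Integrable (fun x : ℝ × ℝ => (p * x.1 + q * x.2 - τ) * ((pd1 h x).re * (h x).re + (pd1 h x).im * (h x).im)) hpm := by
    apply integrable_hpm
    apply Continuous.integrable_of_hasCompactSupport
    · have := Complex.continuous_re.comp hcont
      have := Complex.continuous_im.comp hcont
      have := Complex.continuous_re.comp hcont1
      have := Complex.continuous_im.comp hcont1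
      fun_prop
    · apply HasCompactSupport.mul_left
      refine HasCompactSupport.intro hc.isCompact fun x hx => ?_
      rw [image_eq_zero_of_notMem_tsupport hx]; simp
  have key : (b ^ 2 + q ^ 2) * Th * ∫ x, ‖h x‖ ^ 2 ∂hpm ≤ ∫ x, (‖pd2 h x‖ ^ 2 + ‖W x‖ ^ 2) ∂hpm := by
    rcases hk with hb | ⟨hk1, hk2⟩
    · have := slice_hp hs hc (b ^ 2 + q ^ 2) (by positivity) (fun s => q * (p * s - τ)) (by fun_prop)
      refine this.trans (le_of_eq ?_)
      congr 1
      ext x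
      rw [hW, hb]
      congr 3
      push_cast
      ring
    · have := fourier_hp hs hc b (b ^ 2 + q ^ 2) (by positivity)
      refine this.trans (le_of_eq ?_)
      congr 1
      ext x
      have e : b * (b * x.2 + κ1 + κ2 * x.1) + q * (p * x.1 + q * x.2 - τ)
          = (b ^ 2 + q ^ 2) * x.2 := by
        linear_combination hk1 + x.1 * hk2
      simp only [hW, e]
  have hmono : ∫ x, ((‖pd2 h x‖ ^ 2 + ‖W x‖ ^ 2) - 2 * p * ((p * x.1 + q * x.2 - τ) * ((pd1 h x).re * (h x).re + (pd1 h x).im * (h x).im))) ∂hpm ≤ ∫ x, ndens b p q τ κ1 κ2 h x ∂hpm := by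
    apply integral_mono ((i2.add iW).sub (i3.const_mul _)) (integrable_hpm (integrable_ndens hs hc _ _ _ _ _ _))
    intro x
    have := pointwise_hp b p q (b * x.2 + κ1 + κ2 * x.1) (p * x.1 + q * x.2 - τ) hn (pd1 h x) (h x)
    simp only [ndens, hW, Pi.add_apply, Pi.sub_apply]
    linarith
  have iS : Integrable (fun x => ‖pd2 h x‖ ^ 2 + ‖W x‖ ^ 2) hpm := i2.add iW
  rw [integral_sub iS (i3.const_mul _), integral_const_mul, ibp_hp hs hc] at hmono
  linarith

end MagWedge

namespace MagWedge

/-- rotation/reflection to coordinates adapted to a face -/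
def rot (C S ε : ℝ) : ℝ × ℝ →L[ℝ] ℝ × ℝ :=
  (C • ContinuousLinearMap.fst ℝ ℝ ℝ + (ε * S) • ContinuousLinearMap.snd ℝ ℝ ℝ).prod
    (S • ContinuousLinearMap.fst ℝ ℝ ℝ + (-(ε * C)) • ContinuousLinearMap.snd ℝ ℝ ℝ)

/-- inverse -/
def rotInv (C S ε : ℝ) : ℝ × ℝ →L[ℝ] ℝ × ℝ :=
  (C • ContinuousLinearMap.fst ℝ ℝ ℝ + S • ContinuousLinearMap.snd ℝ ℝ ℝ).prod
    ((ε * S) • ContinuousLinearMap.fst ℝ ℝ ℝ + (-(ε * C)) • ContinuousLinearMap.snd ℝ ℝ ℝ)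

lemma rot_apply (C S ε : ℝ) (x : ℝ × ℝ) :
    rot C S ε x = (C * x.1 + ε * S * x.2, S * x.1 - ε * C * x.2) := by
  simp [rot, sub_eq_add_neg]

lemma rotInv_apply (C S ε : ℝ) (x : ℝ × ℝ) :
    rotInv C S ε x = (C * x.1 + S * x.2, ε * S * x.1 - ε * C * x.2) := by
  simp [rotInv, sub_eq_add_neg]

lemma rot_rotInv {C S ε : ℝ} (h : C ^ 2 + S ^ 2 = 1) (hε : ε ^ 2 = 1) (x : ℝ × ℝ) :
    rot C S ε (rotInv C S ε x) = x := by
  rw [rot_apply, rotInv_apply]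
  ext
  · simp only; linear_combination (S^2 * x.1 - S * C * x.2) * hε + x.1 * h
  · simp only; linear_combination (C^2 * x.2 - S * C * x.1) * hε + x.2 * h

lemma rotInv_rot {C S ε : ℝ} (h : C ^ 2 + S ^ 2 = 1) (hε : ε ^ 2 = 1) (x : ℝ × ℝ) :
    rotInv C S ε (rot C S ε x) = x := by
  rw [rot_apply, rotInv_apply]
  ext
  · simp only; linear_combination x.1 * h
  · simp only; linear_combination (C^2 + S^2) * x.2 * hε + x.2 * h

lemma abs_of_sq_one {ε : ℝ} (hε : ε ^ 2 = 1) : |ε| = 1 := by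
  have := (sq_eq_sq_iff_abs_eq_abs ε 1).1 (by simpa using hε)
  simpa using this

lemma rot_mp {C S ε : ℝ} (h : C ^ 2 + S ^ 2 = 1) (hε : ε ^ 2 = 1) :
    MeasurePreserving (rot C S ε) volume volume := by
  refine ⟨(rot C S ε).continuous.measurable, ?_⟩
  have hdet : LinearMap.det (rot C S ε : ℝ × ℝ →ₗ[ℝ] ℝ × ℝ) = -ε := by
    have : (rot C S ε : ℝ × ℝ →ₗ[ℝ] ℝ × ℝ) =
        Matrix.toLin (Module.Basis.finTwoProd ℝ) (Module.Basis.finTwoProd ℝ) !![C, ε * S; S, -(ε * C)] := by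
      rw [Matrix.toLin_finTwoProd]
      rfl
    rw [this, LinearMap.det_toLin, Matrix.det_fin_two_of]
    linear_combination (-ε) * h
  have habs : |(-ε)⁻¹| = 1 := by
    rw [abs_inv, abs_neg]
    simp [abs_of_sq_one hε]
  have hne : (-ε) ≠ 0 := by
    intro h0; have : ε = 0 := by linarith
    rw [this] at hε; norm_num at hε
  have := Measure.map_linearMap_addHaar_eq_smul_addHaar (volume : Measure (ℝ × ℝ))
    (f := (rot C S ε : ℝ × ℝ →ₗ[ℝ] ℝ × ℝ)) (by rw [hdet]; exact hne)
  rw [hdet, habs] at this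
  simpa using this

lemma rot_emb {C S ε : ℝ} (h : C ^ 2 + S ^ 2 = 1) (hε : ε ^ 2 = 1) :
    MeasurableEmbedding (rot C S ε) :=
  (rot C S ε).continuous.measurableEmbedding
    (Function.LeftInverse.injective (g := rotInv C S ε) (rotInv_rot h hε))

lemma rot_setIntegral {C S ε : ℝ} (h : C ^ 2 + S ^ 2 = 1) (hε : ε ^ 2 = 1) (F : ℝ × ℝ → ℝ)
    (T : Set (ℝ × ℝ)) :
    ∫ x in (rot C S ε) ⁻¹' T, F (rot C S ε x) = ∫ y in T, F y :=
  (rot_mp h hε).setIntegral_preimage_emb (rot_emb h hε) F T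

/-- gauge phase -/
def phase (C S ε b3 κ1 κ2 : ℝ) (y : ℝ × ℝ) : ℝ :=
  -S * b3 * (ε * S * y.1 * y.2 - ε * C * y.2 ^ 2 / 2) - C * ε * S * b3 * y.1 ^ 2 / 2
    + κ1 * y.1 + κ2 * y.1 ^ 2 / 2

lemma phase_contDiff (C S ε b3 κ1 κ2 : ℝ) : ContDiff ℝ (⊤ : ℕ∞) (phase C S ε b3 κ1 κ2) := by
  unfold phase; fun_prop

/-- phase factor times a function -/
def gau (φ : ℝ × ℝ → ℝ) (h : ℝ × ℝ → ℂ) (y : ℝ × ℝ) : ℂ := Complex.exp (φ y * Complex.I) * h y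

lemma gau_contDiff {φ : ℝ × ℝ → ℝ} (hφ : ContDiff ℝ (⊤ : ℕ∞) φ) {h : ℝ × ℝ → ℂ}
    (hs : ContDiff ℝ (⊤ : ℕ∞) h) : ContDiff ℝ (⊤ : ℕ∞) (gau φ h) :=
  ((cd_ofReal hφ).mul contDiff_const).cexp.mul hs

lemma gau_compact {φ : ℝ × ℝ → ℝ} {h : ℝ × ℝ → ℂ} (hc : HasCompactSupport h) :
    HasCompactSupport (gau φ h) := hc.mul_left

lemma norm_gau (φ : ℝ × ℝ → ℝ) (h : ℝ × ℝ → ℂ) (y : ℝ × ℝ) : ‖gau φ h y‖ = ‖h y‖ := by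
  rw [gau, norm_mul, Complex.norm_exp_ofReal_mul_I, one_mul]

/-- the energy density -/
def dens (b1 b2 b3 τ : ℝ) (u : ℝ × ℝ → ℂ) (x : ℝ × ℝ) : ℝ :=
  ‖(-Complex.I) * fderiv ℝ u x (1, 0) + ((x.2 * b3 : ℝ) : ℂ) * u x‖ ^ 2
      + ‖fderiv ℝ u x (0, 1)‖ ^ 2
      + (x.1 * b2 - x.2 * b1 - τ) ^ 2 * ‖u x‖ ^ 2

lemma energy_eq (Ω : Set (ℝ × ℝ)) (b1 b2 b3 τ : ℝ) (u : ℝ × ℝ → ℂ) :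
    energy2D Ω b1 b2 b3 τ u = ∫ x in Ω, dens b1 b2 b3 τ u x := rfl

lemma normal_form {C S ε : ℝ} (hCS : C ^ 2 + S ^ 2 = 1) (hε : ε ^ 2 = 1) (b1 b2 b3 τ κ1 κ2 : ℝ)
    {h : ℝ × ℝ → ℂ} (hs : ContDiff ℝ (⊤ : ℕ∞) h) (x : ℝ × ℝ) :
    dens b1 b2 b3 τ (fun x => gau (phase C S ε b3 κ1 κ2) h (rot C S ε x)) x =
      ndens (-ε * b3) (b2 * C - ε * b1 * S) (b2 * S + ε * b1 * C) τ κ1 κ2 h (rot C S ε x) := by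
  set φ := phase C S ε b3 κ1 κ2 with hφ
  set g := gau φ h with hg
  have hgs : ContDiff ℝ (⊤ : ℕ∞) g := gau_contDiff (phase_contDiff _ _ _ _ _ _) hs
  obtain ⟨⟨s, t⟩, rfl⟩ : ∃ y, x = rotInv C S ε y := ⟨_, (rotInv_rot hCS hε x).symm⟩
  have hfd : ∀ v, fderiv ℝ (fun x => g (rot C S ε x)) (rotInv C S ε (s, t)) v =
      fderiv ℝ g (s, t) (rot C S ε v) := by
    intro v
    have h1 : HasFDerivAt g (fderiv ℝ g (s, t)) (rot C S ε (rotInv C S ε (s, t))) := by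
      rw [rot_rotInv hCS hε]
      exact ((hgs.differentiable (by simp)) (s, t)).hasFDerivAt
    have h2 := h1.comp (rotInv C S ε (s, t)) (rot C S ε).hasFDerivAt
    have h3 := h2.fderiv
    simp only [Function.comp_def] at h3
    rw [h3]; rfl
  have e10 : fderiv ℝ g (s, t) (rot C S ε (1, 0)) = C * pd1 g (s, t) + S * pd2 g (s, t) := by
    have : rot C S ε (1, 0) = C • ((1:ℝ), (0:ℝ)) + S • ((0:ℝ), (1:ℝ)) := by
      rw [rot_apply]; simp
    rw [this, map_add, map_smul, map_smul]; simp [pd1, pd2]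
  have e01 : fderiv ℝ g (s, t) (rot C S ε (0, 1)) = ε * S * pd1 g (s, t) - ε * C * pd2 g (s, t) := by
    have : rot C S ε (0, 1) = (ε * S) • ((1:ℝ), (0:ℝ)) + (-(ε * C)) • ((0:ℝ), (1:ℝ)) := by
      rw [rot_apply]; simp
    rw [this, map_add, map_smul, map_smul]; simp [pd1, pd2]; ring
  set e := Complex.exp (φ (s, t) * Complex.I) with he
  have hen : ‖e‖ = 1 := Complex.norm_exp_ofReal_mul_I _
  have hp1 : pd1 g (s, t) = e * (pd1 h (s, t) + Complex.I * ((-S * b3 * ε * S * t - C * ε * S * b3 * s + κ1 + κ2 * s : ℝ) : ℂ) * h (s, t)) := by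
    refine (pd1_hasDerivAt hgs s t).unique ?_
    have hd : HasDerivAt (fun s => φ (s, t)) (-S * b3 * ε * S * t - C * ε * S * b3 * s + κ1 + κ2 * s) s := by
      simp only [hφ, phase]
      have q2 : HasDerivAt (fun x : ℝ => x ^ 2) (2 * s) s := by simpa using hasDerivAt_pow 2 s
      have q1 : HasDerivAt (fun x : ℝ => x) 1 s := hasDerivAt_id s
      have := (((((((q1.const_mul (ε * S)).mul_const t).sub_const (ε * C * t ^ 2 / 2)).const_mul (-S * b3)).sub
        ((q2.const_mul (C * ε * S * b3)).div_const 2)).add (q1.const_mul κ1)).add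
        ((q2.const_mul κ2).div_const 2))
      convert! this using 1
      ring
    convert! ((hd.ofReal_comp.mul_const Complex.I).cexp).mul (pd1_hasDerivAt hs s t) using 1
    simp only [← he]; ring
  have hp2 : pd2 g (s, t) = e * (pd2 h (s, t) + Complex.I * ((-S * b3 * (ε * S * s - ε * C * t) : ℝ) : ℂ) * h (s, t)) := by
    refine (pd2_hasDerivAt hgs s t).unique ?_
    have hd : HasDerivAt (fun t => φ (s, t)) (-S * b3 * (ε * S * s - ε * C * t)) t := by
      simp only [hφ, phase]
      have q2 : HasDerivAt (fun x : ℝ => x ^ 2) (2 * t) t := by simpa using hasDerivAt_pow 2 t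
      have q1 : HasDerivAt (fun x : ℝ => x) 1 t := hasDerivAt_id t
      have := ((((((q1.const_mul (ε * S * s)).sub ((q2.const_mul (ε * C)).div_const 2)).const_mul (-S * b3)).sub_const
        (C * ε * S * b3 * s ^ 2 / 2)).add_const (κ1 * s)).add_const (κ2 * s ^ 2 / 2))
      convert! this using 1
      ring
    convert! ((hd.ofReal_comp.mul_const Complex.I).cexp).mul (pd2_hasDerivAt hs s t) using 1
    simp only [← he]; ring
  have hgv : g (s, t) = e * h (s, t) := rfl
  simp only [dens, ndens, hfd, e10, e01, rot_rotInv hCS hε, hp1, hp2, hgv]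
  simp only [rotInv_apply]
  generalize pd1 h (s, t) = a
  generalize pd2 h (s, t) = c
  generalize h (s, t) = w
  set X : ℂ := -Complex.I * a + ((-ε * b3 * t + κ1 + κ2 * s : ℝ) : ℂ) * w with hX
  set Y : ℂ := -Complex.I * c with hY
  have hCS' : (C:ℂ) ^ 2 + (S:ℂ) ^ 2 = 1 := by exact_mod_cast hCS
  have hI := Complex.I_sq
  have t1 : -Complex.I * (C * (e * (a + Complex.I * ((-S * b3 * ε * S * t - C * ε * S * b3 * s + κ1 + κ2 * s : ℝ) : ℂ) * w)) + S * (e * (c + Complex.I * ((-S * b3 * (ε * S * s - ε * C * t) : ℝ) : ℂ) * w))) + (((ε * S * s - ε * C * t) * b3 : ℝ) : ℂ) * (e * w) = e * (C * X + S * Y) := by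
    rw [hX, hY]
    push_cast
    have key : ∀ (A B : ℂ), -Complex.I * (C * (e * (a + Complex.I * A * w)) + S * (e * (c + Complex.I * B * w))) = e * (C * (-Complex.I * a) + S * (-Complex.I * c)) + e * (C * A + S * B) * w := by
      intro A B
      linear_combination (- (C * e * A * w) - S * e * B * w) * hI
    rw [key]
    linear_combination (e * w * (-(ε * S * s * b3))) * hCS'
  have t2 : ε * S * (e * (a + Complex.I * ((-S * b3 * ε * S * t - C * ε * S * b3 * s + κ1 + κ2 * s : ℝ) : ℂ) * w)) - ε * C * (e * (c + Complex.I * ((-S * b3 * (ε * S * s - ε * C * t) : ℝ) : ℂ) * w)) = (e * (ε * Complex.I)) * (S * X - C * Y) := by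
    rw [hX, hY]
    push_cast
    have key : ∀ (A B D : ℂ), ε * S * (e * (a + Complex.I * A * w)) - ε * C * (e * (c + Complex.I * B * w)) - (e * (ε * Complex.I)) * (S * (-Complex.I * a + D * w) - C * (-Complex.I * c)) = e * ε * Complex.I * w * (S * A - C * B - S * D) := by
      intro A B D
      linear_combination (e * ε * (S * a - C * c)) * hI
    rw [← sub_eq_zero, key]
    linear_combination (e * ε * Complex.I * w * (S * b3 * ε * t)) * (-hCS')
  rw [t1, t2]
  have hεn : ‖(ε:ℂ) * Complex.I‖ = 1 := by
    rw [norm_mul, Complex.norm_I, mul_one, Complex.norm_real, Real.norm_eq_abs]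
    exact abs_of_sq_one hε
  rw [norm_mul e, norm_mul e w, norm_mul (e * _), norm_mul e, hen, hεn]
  have hXY : (1 * ‖(C:ℂ) * X + S * Y‖) ^ 2 + (1 * 1 * ‖(S:ℂ) * X - C * Y‖) ^ 2 = ‖X‖ ^ 2 + ‖Y‖ ^ 2 := by
    simp only [one_mul, sq_norm_re_im, Complex.add_re, Complex.add_im, Complex.sub_re,
      Complex.sub_im, Complex.mul_re, Complex.mul_im, Complex.ofReal_re, Complex.ofReal_im]
    linear_combination (X.re ^ 2 + X.im ^ 2 + Y.re ^ 2 + Y.im ^ 2) * hCS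
  rw [hXY, hY]
  have hYn : ‖-Complex.I * c‖ = ‖c‖ := by rw [norm_mul, norm_neg, Complex.norm_I, one_mul]
  rw [hYn, one_mul]
  ring

end MagWedge

namespace MagWedge

lemma half_pos {α : ℝ} (hα : α ∈ Set.Ioo 0 π) : 0 < cos (α / 2) ∧ 0 < sin (α / 2) := by
  obtain ⟨h0, h1⟩ := hα
  exact ⟨cos_pos_of_mem_Ioo ⟨by linarith, by linarith⟩, sin_pos_of_pos_of_lt_pi (by linarith) (by linarith)⟩

lemma mem_sector {α : ℝ} (hα : α ∈ Set.Ioo 0 π) (x : ℝ × ℝ) :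
    x ∈ sector α ↔ 0 ≤ sin (α / 2) * x.1 - cos (α / 2) * x.2 ∧
      0 ≤ sin (α / 2) * x.1 + cos (α / 2) * x.2 := by
  obtain ⟨hC, hS⟩ := half_pos hα
  have : x.1 * tan (α / 2) = x.1 * sin (α / 2) / cos (α / 2) := by
    rw [tan_eq_sin_div_cos]; ring
  simp only [sector, mem_ofPred_eq]
  rw [this, le_div_iff₀ hC, ← abs_of_pos hC, ← abs_mul, abs_of_pos hC, abs_le]
  constructor <;> rintro ⟨h1, h2⟩ <;> constructor <;> linarith

lemma meas_sector {α : ℝ} : MeasurableSet (sector α) := by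
  apply IsClosed.measurableSet
  exact isClosed_le (by fun_prop) (by fun_prop)

lemma hpm_eq' : hpm = (volume : Measure (ℝ × ℝ)).restrict (univ ×ˢ Ici (0:ℝ)) := by
  rw [Measure.volume_eq_prod, ← Measure.prod_restrict, Measure.restrict_univ, hpm,
    Measure.restrict_congr_set Ioi_ae_eq_Ici]

lemma sector_to_hp {α C S ε : ℝ} (h : C ^ 2 + S ^ 2 = 1) (hε : ε ^ 2 = 1) (F : ℝ × ℝ → ℝ)
    (hF : ∀ x, F (rot C S ε x) ≠ 0 → (x ∈ sector α ↔ 0 ≤ (rot C S ε x).2)) :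
    ∫ x in sector α, F (rot C S ε x) = ∫ y, F y ∂hpm := by
  rw [hpm_eq', ← rot_setIntegral h hε F (univ ×ˢ Ici (0:ℝ))]
  have hm : MeasurableSet ((rot C S ε) ⁻¹' (univ ×ˢ Ici (0:ℝ))) :=
    (rot C S ε).continuous.measurable (MeasurableSet.univ.prod measurableSet_Ici)
  rw [← integral_indicator meas_sector, ← integral_indicator hm]
  congr 1
  ext x
  by_cases h0 : F (rot C S ε x) = 0
  · simp [indicator, h0]
  · have := hF x h0
    simp only [indicator, mem_preimage, mem_prod, mem_univ, true_and, mem_Ici, this]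

lemma integrable_dens {u : ℝ × ℝ → ℂ} (hs : ContDiff ℝ (⊤ : ℕ∞) u) (hc : HasCompactSupport u)
    (b1 b2 b3 τ : ℝ) : Integrable (dens b1 b2 b3 τ u) := by
  apply Continuous.integrable_of_hasCompactSupport
  · have h1 := (pd1_contDiff hs).continuous
    have h2 := (pd2_contDiff hs).continuous
    have h0 := hs.continuous
    unfold pd1 at h1; unfold pd2 at h2
    unfold dens
    have : Continuous fun x : ℝ × ℝ => ((x.2 * b3 : ℝ) : ℂ) := Complex.continuous_ofReal.comp (by fun_prop)
    fun_prop
  · refine HasCompactSupport.intro hc.isCompact fun x hx => ?_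
    have h1 : pd1 u x = 0 := image_eq_zero_of_notMem_tsupport
      (fun hh => hx (tsupport_fderiv_apply_subset ℝ _ hh))
    have h2 : pd2 u x = 0 := image_eq_zero_of_notMem_tsupport
      (fun hh => hx (tsupport_fderiv_apply_subset ℝ _ hh))
    unfold pd1 at h1; unfold pd2 at h2
    simp only [dens, h1, h2, image_eq_zero_of_notMem_tsupport hx]
    simp

lemma dens_nonneg (b1 b2 b3 τ : ℝ) (u : ℝ × ℝ → ℂ) (x : ℝ × ℝ) : 0 ≤ dens b1 b2 b3 τ u x := by
  unfold dens; positivity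

lemma energy_nonneg (Ω : Set (ℝ × ℝ)) (b1 b2 b3 τ : ℝ) (u : ℝ × ℝ → ℂ) :
    0 ≤ energy2D Ω b1 b2 b3 τ u := by
  rw [energy_eq]; exact integral_nonneg fun x => dens_nonneg _ _ _ _ _ _

lemma norm_nonneg2 (Ω : Set (ℝ × ℝ)) (u : ℝ × ℝ → ℂ) : 0 ≤ norm2D Ω u :=
  integral_nonneg fun x => by positivity

lemma energy_tau (Ω : Set (ℝ × ℝ)) (b1 b2 b3 : ℝ) {u : ℝ × ℝ → ℂ}
    (hs : ContDiff ℝ (⊤ : ℕ∞) u) (hc : HasCompactSupport u) :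
    ∃ D : ℝ, ∀ τ, energy2D Ω b1 b2 b3 τ u =
      energy2D Ω b1 b2 b3 0 u - τ * D + τ ^ 2 * norm2D Ω u := by
  have iV : Integrable (fun x : ℝ × ℝ => 2 * (x.1 * b2 - x.2 * b1) * ‖u x‖ ^ 2) := by
    apply Continuous.integrable_of_hasCompactSupport
    · have := hs.continuous
      fun_prop
    · apply HasCompactSupport.mul_left
      exact hc.comp_left (g := fun z : ℂ => ‖z‖ ^ 2) (by simp)
  refine ⟨∫ x in Ω, 2 * (x.1 * b2 - x.2 * b1) * ‖u x‖ ^ 2, fun τ => ?_⟩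
  have i1 := (integrable_dens hs hc b1 b2 b3 0).restrict (s := Ω)
  have i2 := (iV.const_mul τ).restrict (s := Ω)
  have i3 := ((integrable_sq hs.continuous hc).const_mul (τ ^ 2)).restrict (s := Ω)
  rw [energy_eq, energy_eq, norm2D, ← integral_const_mul, ← integral_const_mul,
    ← integral_sub i1 i2, ← integral_add (i1.sub' i2) i3]
  congr 1
  ext x
  simp only [dens]
  ring

lemma band_bdd (α b1 b2 b3 τ : ℝ) : BddBelow { r : ℝ | ∃ u : ℝ × ℝ → ℂ, ContDiff ℝ (⊤ : ℕ∞) u ∧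
    HasCompactSupport u ∧ 0 < norm2D (sector α) u ∧
    r = energy2D (sector α) b1 b2 b3 τ u / norm2D (sector α) u } := by
  refine ⟨0, ?_⟩
  rintro r ⟨u, -, -, -, rfl⟩
  exact div_nonneg (energy_nonneg _ _ _ _ _ _) (norm_nonneg2 _ _)

lemma band_le (α b1 b2 b3 τ : ℝ) {u : ℝ × ℝ → ℂ} (hs : ContDiff ℝ (⊤ : ℕ∞) u)
    (hc : HasCompactSupport u) (hn : 0 < norm2D (sector α) u) :
    bandFn α b1 b2 b3 τ ≤ energy2D (sector α) b1 b2 b3 τ u / norm2D (sector α) u :=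
  csInf_le (band_bdd _ _ _ _ _) ⟨u, hs, hc, hn, rfl⟩

lemma test_exists {α : ℝ} (hα : α ∈ Set.Ioo 0 π) : ∃ u : ℝ × ℝ → ℂ, ContDiff ℝ (⊤ : ℕ∞) u ∧
    HasCompactSupport u ∧ 0 < norm2D (sector α) u := by
  obtain ⟨hC, hS⟩ := half_pos hα
  let f : ContDiffBump ((1, 0) : ℝ × ℝ) := ⟨1, 2, by norm_num, by norm_num⟩
  have hs : ContDiff ℝ (⊤ : ℕ∞) (fun x => ((f x : ℝ) : ℂ)) := cd_ofReal f.contDiff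
  have hc : HasCompactSupport (fun x => ((f x : ℝ) : ℂ)) :=
    f.hasCompactSupport.comp_left (g := fun r : ℝ => (r : ℂ)) (by simp)
  refine ⟨_, hs, hc, ?_⟩
  rw [norm2D, setIntegral_pos_iff_support_of_nonneg_ae (ae_of_all _ fun x => by positivity)
    (integrable_sq hs.continuous hc).integrableOn]
  let U : Set (ℝ × ℝ) := Metric.ball (1, 0) 2 ∩ ({x | 0 < sin (α / 2) * x.1 - cos (α / 2) * x.2} ∩
    {x | 0 < sin (α / 2) * x.1 + cos (α / 2) * x.2})
  have hU : IsOpen U := Metric.isOpen_ball.inter ((isOpen_lt (by fun_prop) (by fun_prop)).inter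
    (isOpen_lt (by fun_prop) (by fun_prop)))
  refine (hU.measure_pos volume ⟨(1, 0), ?_⟩).trans_le (measure_mono ?_)
  · simp [U, hS]
  · rintro x ⟨h1, h2, h3⟩
    refine ⟨?_, (mem_sector hα x).2 ⟨le_of_lt h2, le_of_lt h3⟩⟩
    have : f x ≠ 0 := by
      have : x ∈ Function.support f := by rw [f.support_eq]; exact h1
      exact this
    simp [this]

lemma le_band {α : ℝ} (hα : α ∈ Set.Ioo 0 π) (b1 b2 b3 τ c : ℝ)
    (H : ∀ u : ℝ × ℝ → ℂ, ContDiff ℝ (⊤ : ℕ∞) u → HasCompactSupport u → 0 < norm2D (sector α) u →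
      c * norm2D (sector α) u ≤ energy2D (sector α) b1 b2 b3 τ u) :
    c ≤ bandFn α b1 b2 b3 τ := by
  obtain ⟨u, hs, hc, hn⟩ := test_exists hα
  refine le_csInf ⟨_, u, hs, hc, hn, rfl⟩ ?_
  rintro r ⟨u, hs, hc, hn, rfl⟩
  rw [le_div_iff₀ hn]
  exact H u hs hc hn

lemma band_mul_le (α b1 b2 b3 τ : ℝ) {u : ℝ × ℝ → ℂ} (hs : ContDiff ℝ (⊤ : ℕ∞) u)
    (hc : HasCompactSupport u) (hn : 0 < norm2D (sector α) u) :
    bandFn α b1 b2 b3 τ * norm2D (sector α) u ≤ energy2D (sector α) b1 b2 b3 τ u := by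
  rw [← le_div_iff₀ hn]; exact band_le _ _ _ _ _ hs hc hn

lemma band_nonneg {α : ℝ} (hα : α ∈ Set.Ioo 0 π) (b1 b2 b3 τ : ℝ) : 0 ≤ bandFn α b1 b2 b3 τ :=
  le_band hα _ _ _ _ _ fun u _ _ _ => by rw [zero_mul]; exact energy_nonneg _ _ _ _ _ _

lemma band_continuous {α : ℝ} (hα : α ∈ Set.Ioo 0 π) (b1 b2 b3 : ℝ) :
    Continuous (fun τ => bandFn α b1 b2 b3 τ) := by
  have hconc : ConcaveOn ℝ univ (fun τ => bandFn α b1 b2 b3 τ - τ ^ 2) := by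
    refine ⟨convex_univ, fun x _ y _ a b ha hb hab => ?_⟩
    simp only [smul_eq_mul]
    rw [le_sub_iff_add_le]
    apply le_band hα
    intro u hs hc hn
    obtain ⟨D, hD⟩ := energy_tau (sector α) b1 b2 b3 hs hc
    have hx := band_mul_le α b1 b2 b3 x hs hc hn
    have hy := band_mul_le α b1 b2 b3 y hs hc hn
    rw [hD] at hx hy ⊢
    obtain rfl : b = 1 - a := by linarith
    have hx' := mul_le_mul_of_nonneg_left hx ha
    have hy' := mul_le_mul_of_nonneg_left hy hb
    linear_combination hx' + hy'
  have h1 := continuousOn_univ.1 (hconc.continuousOn isOpen_univ)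
  have : (fun τ => bandFn α b1 b2 b3 τ) = fun τ => (bandFn α b1 b2 b3 τ - τ ^ 2) + τ ^ 2 := by
    ext; ring
  rw [this]
  fun_prop

end MagWedge

namespace MagWedge

/-- scaled cutoff -/
def ccut (n s : ℝ) : ℝ := cut (s / n - 3)

lemma ccut_contDiff (n : ℝ) : ContDiff ℝ (⊤ : ℕ∞) (ccut n) :=
  cut_contDiff.comp ((contDiff_id.div_const n).sub contDiff_const)

lemma ccut_hasDerivAt (n s : ℝ) : HasDerivAt (ccut n) (deriv cut (s / n - 3) / n) s := by
  have h1 : HasDerivAt cut (deriv cut (s / n - 3)) (s / n - 3) :=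
    ((cut_contDiff.differentiable (by simp)) _).hasDerivAt
  have h2 : HasDerivAt (fun s : ℝ => s / n - 3) (1 / n) s := ((hasDerivAt_id s).div_const n).sub_const 3
  convert! h1.comp s h2 using 1
  ring

lemma cut_tsupport {y : ℝ} (h : y ∈ tsupport cut) : |y| ≤ 2 := by
  have hcl : IsClosed {y : ℝ | |y| ≤ 2} := isClosed_le (by fun_prop) (by fun_prop)
  refine closure_minimal (s := Function.support cut) (t := {y : ℝ | |y| ≤ 2}) ?_ hcl h
  intro z hz
  by_contra hcon
  exact hz (cut_eq_zero (le_of_lt (not_le.1 hcon)))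

lemma deriv_cut_eq_zero {y : ℝ} (h : ¬ |y| ≤ 2) : deriv cut y = 0 := by
  by_contra hcon
  exact h (cut_tsupport (support_deriv_subset hcon))

lemma cut_eq_zero' {y : ℝ} (h : ¬ |y| ≤ 2) : cut y = 0 := cut_eq_zero (le_of_lt (not_le.1 h))

lemma int_shift {n : ℝ} (hn : 0 < n) (g : ℝ → ℝ) : ∫ s, g (s / n - 3) = n * ∫ y, g y := by
  have h1 := Measure.integral_comp_div (fun y => g (y - 3)) n
  rw [h1, integral_sub_right_eq_self, abs_of_pos hn, smul_eq_mul]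

lemma cutsq_pos : 0 < ∫ y, cut y ^ 2 := by
  have hi : Integrable (fun y => cut y ^ 2) := by
    apply Continuous.integrable_of_hasCompactSupport (cut_contDiff.continuous.pow 2)
    refine HasCompactSupport.intro cut_compact.isCompact fun y hy => ?_
    rw [Pi.pow_apply, image_eq_zero_of_notMem_tsupport hy]; norm_num
  rw [integral_pos_iff_support_of_nonneg (fun y => by positivity) hi]
  refine (isOpen_Ioo (a := (-1:ℝ)) (b := 1)).measure_pos volume ⟨0, by norm_num⟩ |>.trans_le (measure_mono ?_)
  intro y hy
  have : cut y = 1 := cut_eq_one (abs_le.2 ⟨hy.1.le, hy.2.le⟩)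
  simp [this]

/-- tensor trial function -/
def tri (n : ℝ) (f : ℝ → ℂ) (y : ℝ × ℝ) : ℂ := (ccut n y.1 : ℂ) * f y.2

lemma tri_contDiff (n : ℝ) {f : ℝ → ℂ} (hf : ContDiff ℝ (⊤ : ℕ∞) f) :
    ContDiff ℝ (⊤ : ℕ∞) (tri n f) :=
  (cd_ofReal ((ccut_contDiff n).comp contDiff_fst)).mul (hf.comp contDiff_snd)

lemma tri_compact {n : ℝ} (hn : 0 < n) {f : ℝ → ℂ} {A : ℝ} (hA : ∀ t, ¬ |t| ≤ A → f t = 0) :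
    HasCompactSupport (tri n f) := by
  refine HasCompactSupport.intro (K := Icc n (5 * n) ×ˢ Icc (-A) A) (isCompact_Icc.prod isCompact_Icc) ?_
  rintro ⟨s, t⟩ h
  by_cases h1 : |t| ≤ A
  · have : ¬ |s / n - 3| ≤ 2 := by
      intro h2
      apply h
      rw [abs_le] at h2 h1
      have e1 : 1 ≤ s / n := by linarith
      have e2 : s / n ≤ 5 := by linarith
      rw [le_div_iff₀ hn] at e1
      rw [div_le_iff₀ hn] at e2
      exact ⟨⟨by linarith, by linarith⟩, h1⟩
    simp [tri, ccut, cut_eq_zero' this]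
  · simp [tri, hA t h1]

lemma tri_ndens (n ξ γ : ℝ) {f : ℝ → ℂ} (hf : ContDiff ℝ (⊤ : ℕ∞) f) (y : ℝ × ℝ) :
    ndens (-cos γ) 0 (sin γ) (ξ * sin γ) (ξ * cos γ) 0 (tri n f) y =
      (deriv cut (y.1 / n - 3) ^ 2) * (‖f y.2‖ ^ 2 / n ^ 2) +
      (cut (y.1 / n - 3) ^ 2) * (‖deriv f y.2‖ ^ 2 + (y.2 - ξ) ^ 2 * ‖f y.2‖ ^ 2) := by
  obtain ⟨s, t⟩ := y
  have e1 : pd1 (tri n f) (s, t) = ((deriv cut (s / n - 3) / n : ℝ) : ℂ) * f t :=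
    (pd1_hasDerivAt (tri_contDiff n hf) s t).unique ((ccut_hasDerivAt n s).ofReal_comp.mul_const (f t))
  have e2 : pd2 (tri n f) (s, t) = (ccut n s : ℂ) * deriv f t :=
    (pd2_hasDerivAt (tri_contDiff n hf) s t).unique
      ((((hf.differentiable (by simp)) t).hasDerivAt).const_mul (ccut n s : ℂ))
  rw [ndens, e1, e2]
  simp only [tri, ccut]
  generalize cut (s / n - 3) = c
  generalize deriv cut (s / n - 3) = c'
  generalize f t = w
  generalize deriv f t = w'
  have h1 := cos_sq' γ
  simp only [sq_norm_re_im, Complex.add_re, Complex.add_im, Complex.mul_re, Complex.mul_im,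
    Complex.neg_re, Complex.neg_im, Complex.I_re, Complex.I_im, Complex.ofReal_re,
    Complex.ofReal_im]
  linear_combination (c ^ 2 * (t - ξ) ^ 2 * (w.re ^ 2 + w.im ^ 2)) * h1

lemma integrable_sq1 {f : ℝ → ℂ} (hs : Continuous f) (hc : HasCompactSupport f) :
    Integrable (fun p => ‖f p‖ ^ 2) := by
  apply Continuous.integrable_of_hasCompactSupport (by fun_prop)
  exact hc.comp_left (g := fun z : ℂ => ‖z‖ ^ 2) (by simp)

lemma band_upper {α : ℝ} (hα : α ∈ Set.Ioo 0 π) (γ x : ℝ) (hx : Th < x) :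
    ∃ τ, bandFn α (sin γ * cos (α/2)) (sin γ * sin (α/2)) (cos γ) τ < x := by
  obtain ⟨ξ, f, hf, hfc, hN, hQ⟩ := Th_approx hx
  obtain ⟨hC, hS⟩ := half_pos hα
  have hCS : cos (α/2) ^ 2 + sin (α/2) ^ 2 = 1 := cos_sq_add_sin_sq _
  set C := cos (α/2)
  set S := sin (α/2)
  refine ⟨ξ * sin γ, ?_⟩
  obtain ⟨A, hA⟩ : ∃ A, ∀ t, ¬ |t| ≤ A → f t = 0 ∧ deriv f t = 0 := by
    obtain ⟨A, hA⟩ := (hfc.isCompact.isBounded).subset_closedBall 0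
    refine ⟨A, fun t ht => ?_⟩
    have hnot : t ∉ tsupport f := fun h => ht (by simpa using hA h)
    exact ⟨image_eq_zero_of_notMem_tsupport hnot,
      by by_contra hcon; exact hnot (support_deriv_subset hcon)⟩
  set K0 := ∫ y, cut y ^ 2 with hK0
  set K1 := ∫ y, deriv cut y ^ 2 with hK1
  have hK0p : 0 < K0 := cutsq_pos
  set δ := x * N1 f - Q1 ξ f with hδ
  have hδp : 0 < δ := by linarith
  obtain ⟨n, hn1, hn2, hn3⟩ : ∃ n : ℝ, 1 ≤ n ∧ A / (2 * S * C) ≤ n ∧ K1 * N1 f / (K0 * δ) < n :=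
    ⟨max 1 (max (A / (2 * S * C)) (K1 * N1 f / (K0 * δ) + 1)), le_max_left _ _,
      (le_max_left _ _).trans (le_max_right _ _),
      (lt_add_one _).trans_le ((le_max_right _ _).trans (le_max_right _ _))⟩
  have hn : 0 < n := by linarith
  rw [div_le_iff₀ (by positivity)] at hn2
  rw [div_lt_iff₀ (by positivity)] at hn3
  have hts := tri_contDiff n hf
  have htc := tri_compact hn (fun t ht => (hA t ht).1)
  -- geometry
  have hgeo : ∀ z, |(rot C S 1 z).1 / n - 3| ≤ 2 → |(rot C S 1 z).2| ≤ A →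
      (z ∈ sector α ↔ 0 ≤ (rot C S 1 z).2) := by
    intro z h1 h2
    rw [mem_sector hα]
    have hz := rotInv_rot hCS (by norm_num : (1:ℝ)^2 = 1) z
    generalize rot C S 1 z = y at h1 h2 hz
    rw [← hz, rotInv_apply]
    have e1 : 1 ≤ y.1 / n := by rw [abs_le] at h1; linarith
    rw [le_div_iff₀ hn] at e1
    rw [abs_le] at h2
    have e2 : S * (C * y.1 + S * y.2) - C * (1 * S * y.1 - 1 * C * y.2) = y.2 := by
      linear_combination y.2 * hCS
    have e3 : 0 ≤ S * (C * y.1 + S * y.2) + C * (1 * S * y.1 - 1 * C * y.2) := by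
      have q1 : 2 * S * C * n ≤ 2 * S * C * y.1 := mul_le_mul_of_nonneg_left (by linarith) (by positivity)
      have q2 : -A ≤ (S ^ 2 - C ^ 2) * y.2 := by
        have hA0 : |y.2| ≤ A := abs_le.2 h2
        have : |(S ^ 2 - C ^ 2) * y.2| ≤ A := by
          rw [abs_mul]
          calc _ ≤ 1 * |y.2| := by
                gcongr
                rw [abs_le]; constructor <;> nlinarith [sq_nonneg S, sq_nonneg C]
            _ ≤ A := by linarith
        exact (abs_le.1 this).1
      nlinarith
    simp only [C, S] at e2 e3 ⊢
    rw [e2]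
    exact ⟨fun h => h.1, fun h => ⟨h, e3⟩⟩
  set u : ℝ × ℝ → ℂ := fun z => gau (phase C S 1 (cos γ) (ξ * cos γ) 0) (tri n f) (rot C S 1 z) with hu
  have hus : ContDiff ℝ (⊤ : ℕ∞) u :=
    (gau_contDiff (phase_contDiff _ _ _ _ _ _) hts).comp (rot C S 1).contDiff
  have huc : HasCompactSupport u := by
    have : HasCompactSupport (gau (phase C S 1 (cos γ) (ξ * cos γ) 0) (tri n f)) := gau_compact htc
    refine HasCompactSupport.intro (this.isCompact.image (rotInv C S 1).continuous) fun z hz => ?_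
    by_contra hcon
    exact hz ⟨rot C S 1 z, subset_tsupport _ hcon, rotInv_rot hCS (by norm_num) z⟩
  have hnorm : norm2D (sector α) u = n * K0 * N1 f := by
    rw [norm2D]
    simp only [hu, norm_gau]
    rw [sector_to_hp hCS (by norm_num) (fun y => ‖tri n f y‖ ^ 2)]
    · have : ∀ y : ℝ × ℝ, ‖tri n f y‖ ^ 2 = (cut (y.1 / n - 3) ^ 2) * ‖f y.2‖ ^ 2 := by
        intro y; simp [tri, ccut, mul_pow]
      simp only [this]
      rw [integral_prod_mul (fun s : ℝ => cut (s / n - 3) ^ 2) (fun t : ℝ => ‖f t‖ ^ 2),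
        int_shift hn (fun y => cut y ^ 2)]
      rfl
    · intro z hz
      apply hgeo
      · by_contra hcon; apply hz; simp [tri, ccut, cut_eq_zero' hcon]
      · by_contra hcon; apply hz; simp [tri, (hA _ hcon).1]
  have hen : energy2D (sector α) (sin γ * C) (sin γ * S) (cos γ) (ξ * sin γ) u
      = n * K1 * (N1 f / n ^ 2) + n * K0 * Q1 ξ f := by
    rw [energy_eq]
    simp only [hu, normal_form hCS (by norm_num : (1:ℝ)^2 = 1) _ _ _ _ _ _ hts]
    have p1 : -1 * cos γ = - cos γ := by ring
    have p2 : sin γ * S * C - 1 * (sin γ * C) * S = 0 := by ring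
    have p3 : sin γ * S * S + 1 * (sin γ * C) * C = sin γ := by linear_combination sin γ * hCS
    rw [p1, p2, p3, sector_to_hp hCS (by norm_num)]
    · simp only [tri_ndens n ξ γ hf]
      have hfd : Continuous (deriv f) := (hf.continuous_deriv (by simp))
      rw [integral_add, integral_prod_mul (fun s : ℝ => deriv cut (s / n - 3) ^ 2) (fun t : ℝ => ‖f t‖ ^ 2 / n ^ 2),
        integral_prod_mul (fun s : ℝ => cut (s / n - 3) ^ 2) (fun t : ℝ => ‖deriv f t‖ ^ 2 + (t - ξ) ^ 2 * ‖f t‖ ^ 2),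
        int_shift hn (fun y => cut y ^ 2), int_shift hn (fun y => deriv cut y ^ 2), integral_div]
      · rfl
      all_goals
        apply integrable_hpm
        apply Continuous.integrable_of_hasCompactSupport
        · have := cut_contDiff.continuous
          have := cut_contDiff.continuous_deriv (by simp)
          have := hf.continuous
          fun_prop
        · refine HasCompactSupport.intro (K := Icc n (5 * n) ×ˢ Icc (-A) A) (isCompact_Icc.prod isCompact_Icc) ?_
          rintro ⟨s, t⟩ h
          by_cases h1 : |t| ≤ A
          · have : ¬ |s / n - 3| ≤ 2 := by
              intro h2
              apply h
              rw [abs_le] at h2 h1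
              have e1 : 1 ≤ s / n := by linarith
              have e2 : s / n ≤ 5 := by linarith
              rw [le_div_iff₀ hn] at e1
              rw [div_le_iff₀ hn] at e2
              exact ⟨⟨by linarith, by linarith⟩, h1⟩
            simp [cut_eq_zero' this, deriv_cut_eq_zero this]
          · simp [hA t h1]
    · intro z hz
      rw [tri_ndens n ξ γ hf] at hz
      apply hgeo
      · by_contra hcon; apply hz; simp [cut_eq_zero' hcon, deriv_cut_eq_zero hcon]
      · by_contra hcon; apply hz; simp [hA _ hcon]
  have hnp : 0 < norm2D (sector α) u := by rw [hnorm]; positivity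
  refine (band_le α _ _ _ _ hus huc hnp).trans_lt ?_
  rw [div_lt_iff₀ hnp, hen, hnorm]
  have : n * K1 * (N1 f / n ^ 2) = K1 * N1 f / n := by field_simp
  rw [this]
  have : K1 * N1 f / n < K0 * δ := by rw [div_lt_iff₀ hn]; linarith
  have : K0 * δ ≤ n * (K0 * δ) := le_mul_of_one_le_left (by positivity) hn1
  have : n * (K0 * δ) = x * (n * K0 * N1 f) - n * K0 * Q1 ξ f := by rw [hδ]; ring
  linarith

end MagWedge

namespace MagWedge

lemma st_deriv_bdd : ∃ M : ℝ, ∀ y, |deriv Real.smoothTransition y| ≤ M := by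
  have hc : Continuous (deriv Real.smoothTransition) :=
    (Real.smoothTransition.contDiff (n := (1:ℕ∞))).continuous_deriv (by simp)
  have hcs : HasCompactSupport (deriv Real.smoothTransition) := by
    refine HasCompactSupport.intro (K := Icc 0 1) isCompact_Icc fun y hy => ?_
    rcases lt_or_ge y 0 with h | h
    · have : Real.smoothTransition =ᶠ[nhds y] fun _ => 0 := by
        filter_upwards [Iio_mem_nhds h] with z hz
        exact Real.smoothTransition.zero_of_nonpos (le_of_lt hz)
      rw [this.deriv_eq]; simp
    · have h1 : 1 < y := by
        by_contra hcon
        exact hy ⟨h, not_lt.1 hcon⟩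
      have : Real.smoothTransition =ᶠ[nhds y] fun _ => 1 := by
        filter_upwards [Ioi_mem_nhds h1] with z hz
        exact Real.smoothTransition.one_of_one_le (le_of_lt hz)
      rw [this.deriv_eq]; simp
  obtain ⟨M, hM⟩ := hc.bounded_above_of_compact_support hcs
  exact ⟨M, fun y => by simpa using hM y⟩

/-- localization angle -/
def thet (C S R : ℝ) (x : ℝ × ℝ) : ℝ := (π / 2) * Real.smoothTransition ((S * x.1 - C * x.2) / R - 1)

lemma thet_contDiff (C S R : ℝ) : ContDiff ℝ (⊤ : ℕ∞) (thet C S R) := by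
  unfold thet
  refine contDiff_const.mul (Real.smoothTransition.contDiff.comp ?_)
  fun_prop

lemma thet_fderiv (C S R : ℝ) (x v : ℝ × ℝ) : fderiv ℝ (thet C S R) x v =
    (π / 2) * deriv Real.smoothTransition ((S * x.1 - C * x.2) / R - 1) * ((S * v.1 - C * v.2) / R) := by
  have h1 : HasDerivAt Real.smoothTransition (deriv Real.smoothTransition ((S * x.1 - C * x.2) / R - 1))
      ((S * x.1 - C * x.2) / R - 1) :=
    ((Real.smoothTransition.contDiff (n := (1:ℕ∞))).differentiable (by simp) _).hasDerivAt
  let l : ℝ × ℝ →L[ℝ] ℝ := R⁻¹ • (S • ContinuousLinearMap.fst ℝ ℝ ℝ - C • ContinuousLinearMap.snd ℝ ℝ ℝ)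
  have hl : ∀ z : ℝ × ℝ, l z = (S * z.1 - C * z.2) / R := by
    intro z; simp [l]; ring
  have h2 : HasFDerivAt (fun x : ℝ × ℝ => (S * x.1 - C * x.2) / R - 1) l x := by
    have := l.hasFDerivAt (x := x)
    simpa only [hl] using this.sub_const (1:ℝ)
  have h3 := (h1.comp_hasFDerivAt x h2).const_mul (π / 2)
  have h4 : fderiv ℝ (thet C S R) x = _ := h3.fderiv
  rw [h4]
  simp only [smul_apply, smul_eq_mul, hl]
  ring

lemma thet_grad {C S R M : ℝ} (h : C ^ 2 + S ^ 2 = 1) (hM : ∀ y, |deriv Real.smoothTransition y| ≤ M)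
    (x : ℝ × ℝ) :
    (fderiv ℝ (thet C S R) x (1, 0)) ^ 2 + (fderiv ℝ (thet C S R) x (0, 1)) ^ 2 ≤
      (π / 2 * M) ^ 2 / R ^ 2 := by
  rw [thet_fderiv, thet_fderiv]
  have h1 := hM ((S * x.1 - C * x.2) / R - 1)
  generalize deriv Real.smoothTransition ((S * x.1 - C * x.2) / R - 1) = g at h1 ⊢
  have h2 : g ^ 2 ≤ M ^ 2 := sq_le_sq' (by linarith [(abs_le.1 h1).1]) (abs_le.1 h1).2
  have e : (π / 2 * g * ((S * (1, (0:ℝ)).1 - C * ((1:ℝ), (0:ℝ)).2) / R)) ^ 2 + (π / 2 * g * ((S * ((0:ℝ), (1:ℝ)).1 - C * ((0:ℝ), (1:ℝ)).2) / R)) ^ 2 = (π / 2) ^ 2 * g ^ 2 / R ^ 2 := by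
    simp only
    have : (π / 2) ^ 2 * g ^ 2 / R ^ 2 = (π / 2) ^ 2 * g ^ 2 / R ^ 2 * (C ^ 2 + S ^ 2) := by rw [h, mul_one]
    rw [this]; ring
  rw [e, mul_pow]
  gcongr

/-- product with a real function -/
lemma fderiv_mul_real {χ : ℝ × ℝ → ℝ} {χ' : ℝ} {u : ℝ × ℝ → ℂ} {x v : ℝ × ℝ}
    {L : ℝ × ℝ →L[ℝ] ℝ} (hχ : HasFDerivAt χ L x) (hL : L v = χ')
    (hu : DifferentiableAt ℝ u x) :
    fderiv ℝ (fun x => (χ x : ℂ) * u x) x v = (χ' : ℂ) * u x + (χ x : ℂ) * fderiv ℝ u x v := by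
  have h1 : HasFDerivAt (fun x => (χ x : ℂ)) (Complex.ofRealCLM.comp L) x :=
    Complex.ofRealCLM.hasFDerivAt.comp x hχ
  have h2 := (h1.mul hu.hasFDerivAt).fderiv
  have h3 : fderiv ℝ (fun x => (χ x : ℂ) * u x) x = _ := h2
  rw [h3]
  simp [hL]
  ring

lemma ims (b1 b2 b3 τ : ℝ) {θ : ℝ × ℝ → ℝ} (hθ : ContDiff ℝ (⊤ : ℕ∞) θ) {u : ℝ × ℝ → ℂ}
    (hs : ContDiff ℝ (⊤ : ℕ∞) u) (x : ℝ × ℝ) :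
    dens b1 b2 b3 τ (fun x => (cos (θ x) : ℂ) * u x) x + dens b1 b2 b3 τ (fun x => (sin (θ x) : ℂ) * u x) x
      = dens b1 b2 b3 τ u x + ((fderiv ℝ θ x (1, 0)) ^ 2 + (fderiv ℝ θ x (0, 1)) ^ 2) * ‖u x‖ ^ 2 := by
  have hd : HasFDerivAt θ (fderiv ℝ θ x) x := ((hθ.differentiable (by simp)) x).hasFDerivAt
  have hu : DifferentiableAt ℝ u x := (hs.differentiable (by simp)) x
  have c1 := fun v => fderiv_mul_real (v := v) (χ := fun x => cos (θ x)) hd.cos rfl hu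
  have c2 := fun v => fderiv_mul_real (v := v) (χ := fun x => sin (θ x)) hd.sin rfl hu
  simp only [dens]
  rw [c1, c1, c2, c2]
  simp only [smul_apply, smul_eq_mul]
  generalize fderiv ℝ θ x (1, 0) = p
  generalize fderiv ℝ θ x (0, 1) = q
  generalize fderiv ℝ u x (1, 0) = a
  generalize fderiv ℝ u x (0, 1) = c
  generalize u x = w
  have h := cos_sq' (θ x)
  generalize cos (θ x) = cc at h ⊢
  generalize sin (θ x) = ss at h ⊢
  have h' : cc ^ 2 + ss ^ 2 = 1 := by linarith
  simp only [sq_norm_re_im, Complex.add_re, Complex.add_im, Complex.mul_re, Complex.mul_im,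
    Complex.neg_re, Complex.neg_im, Complex.I_re, Complex.I_im, Complex.ofReal_re,
    Complex.ofReal_im]
  generalize x.1 * b2 - x.2 * b1 - τ = V
  generalize x.2 * b3 = m
  linear_combination ((a.im + m * w.re) ^ 2 + (-a.re + m * w.im) ^ 2 + (p ^ 2 + q ^ 2) * (w.re ^ 2 + w.im ^ 2)
    + (c.re ^ 2 + c.im ^ 2) + V ^ 2 * (w.re ^ 2 + w.im ^ 2)) * h'

lemma lower_hp {α γ : ℝ} (hα : α ∈ Set.Ioo 0 π) (τ R : ℝ) (hR : 0 < R) {w : ℝ × ℝ → ℂ}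
    (hs : ContDiff ℝ (⊤ : ℕ∞) w) (hc : HasCompactSupport w)
    (hw : ∀ x : ℝ × ℝ, sin (α/2) * x.1 - cos (α/2) * x.2 < R → w x = 0) :
    ((1 - (2 * sin γ * sin (α/2) * cos (α/2)) ^ 2) * Th + (2 * sin γ * sin (α/2) * cos (α/2)) ^ 2) *
      norm2D (sector α) w ≤
      energy2D (sector α) (sin γ * cos (α/2)) (sin γ * sin (α/2)) (cos γ) τ w := by
  obtain ⟨hC, hS⟩ := half_pos hα
  have hCS : cos (α/2) ^ 2 + sin (α/2) ^ 2 = 1 := cos_sq_add_sin_sq _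
  have hsec := mem_sector hα
  set C := cos (α/2)
  set S := sin (α/2)
  have hε : (-1 : ℝ) ^ 2 = 1 := by norm_num
  have hγ := cos_sq_add_sin_sq γ
  set b := - -1 * cos γ with hb
  set p := sin γ * S * C - -1 * (sin γ * C) * S with hp
  set q := sin γ * S * S + -1 * (sin γ * C) * C with hq
  have hn : b ^ 2 + p ^ 2 + q ^ 2 = 1 := by
    rw [hb, hp, hq]
    linear_combination hγ + sin γ ^ 2 * (C ^ 2 + S ^ 2 + 1) * hCS
  obtain ⟨κ1, κ2, hk⟩ : ∃ κ1 κ2 : ℝ, b = 0 ∨ (b * κ1 = q * τ ∧ b * κ2 = -(q * p)) := by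
    by_cases h0 : b = 0
    · exact ⟨0, 0, Or.inl h0⟩
    · exact ⟨q * τ / b, -(q * p) / b, Or.inr ⟨by field_simp, by field_simp⟩⟩
  set φ := phase C S (-1) (cos γ) κ1 κ2 with hφ
  set h : ℝ × ℝ → ℂ := gau (fun y => - φ y) (fun y => w (rotInv C S (-1) y)) with hh
  have hhs : ContDiff ℝ (⊤ : ℕ∞) h :=
    gau_contDiff (phase_contDiff _ _ _ _ _ _).neg (hs.comp (rotInv C S (-1)).contDiff)
  have hhc : HasCompactSupport h := by
    apply gau_compact
    refine HasCompactSupport.intro (hc.isCompact.image (rot C S (-1)).continuous) fun z hz => ?_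
    by_contra hcon
    exact hz ⟨rotInv C S (-1) z, subset_tsupport _ hcon, rot_rotInv hCS hε z⟩
  have hwe : w = fun x => gau φ h (rot C S (-1) x) := by
    ext x
    simp only [gau, hh, rotInv_rot hCS hε]
    rw [← mul_assoc, ← Complex.exp_add]
    simp
  have hnw : ∀ x, ‖w x‖ ^ 2 = ‖h (rot C S (-1) x)‖ ^ 2 := by
    intro x
    conv_lhs => rw [hwe]
    simp only [norm_gau]
  have hdw : ∀ x, dens (sin γ * C) (sin γ * S) (cos γ) τ w x = ndens b p q τ κ1 κ2 h (rot C S (-1) x) := by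
    intro x
    conv_lhs => rw [hwe]
    exact normal_form hCS hε _ _ _ _ _ _ hhs x
  have hgeo : ∀ x : ℝ × ℝ, ¬ (S * x.1 - C * x.2 < R) → (x ∈ sector α ↔ 0 ≤ (rot C S (-1) x).2) := by
    intro x hx
    rw [hsec, rot_apply]
    have hx' := not_lt.1 hx
    constructor
    · rintro ⟨-, h2⟩
      simp only; linarith
    · intro h2
      simp only at h2
      exact ⟨by linarith, by linarith⟩
  have key := hp_bound hhs hhc b p q τ κ1 κ2 hn hk
  have e1 : norm2D (sector α) w = ∫ y, ‖h y‖ ^ 2 ∂hpm := by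
    rw [norm2D]
    simp only [hnw]
    apply sector_to_hp hCS hε (fun y => ‖h y‖ ^ 2)
    intro x hx
    apply hgeo
    intro hlt
    apply hx
    rw [← hnw, hw x hlt]; simp
  have e2 : energy2D (sector α) (sin γ * C) (sin γ * S) (cos γ) τ w = ∫ y, ndens b p q τ κ1 κ2 h y ∂hpm := by
    rw [energy_eq]
    simp only [hdw]
    apply sector_to_hp hCS hε
    intro x hx
    apply hgeo
    intro hlt
    apply hx
    rw [← hdw]
    have hev : w =ᶠ[nhds x] fun _ => 0 := by
      have : {x : ℝ × ℝ | S * x.1 - C * x.2 < R} ∈ nhds x :=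
        (isOpen_lt (by fun_prop) (by fun_prop)).mem_nhds hlt
      filter_upwards [this] with z hz
      exact hw z hz
    have hf := hev.fderiv_eq (𝕜 := ℝ)
    simp only [dens, hf, hw x hlt]
    simp
  rw [e1, e2]
  have hcoef : (1 - (2 * sin γ * S * C) ^ 2) * Th + (2 * sin γ * S * C) ^ 2 = (b ^ 2 + q ^ 2) * Th + p ^ 2 := by
    have : p = 2 * sin γ * S * C := by rw [hp]; ring
    rw [← this]
    linear_combination -Th * hn
  rw [hcoef]
  exact key

lemma band_lower {α γ : ℝ} (hα : α ∈ Set.Ioo 0 π) (hγ : 0 < sin γ) :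
    ∃ K : ℝ, ∀ τ Λ : ℝ, 0 < τ → Λ = (1 - (2 * sin γ * sin (α/2) * cos (α/2)) ^ 2) * Th +
        (2 * sin γ * sin (α/2) * cos (α/2)) ^ 2 → Λ ≤ τ ^ 2 / 4 →
      Λ - K / τ ^ 2 ≤ bandFn α (sin γ * cos (α/2)) (sin γ * sin (α/2)) (cos γ) τ := by
  obtain ⟨M, hM⟩ := st_deriv_bdd
  refine ⟨(π / 2 * M) ^ 2 * 16 * sin γ ^ 2, fun τ Λ hτ hΛ hΛτ => ?_⟩
  apply le_band hα
  intro u hs hc _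
  have hCS : cos (α/2) ^ 2 + sin (α/2) ^ 2 = 1 := cos_sq_add_sin_sq _
  set R := τ / (4 * sin γ) with hRdef
  have hR : 0 < R := by positivity
  have hσR : sin γ * R = τ / 4 := by rw [hRdef]; field_simp
  set θ := thet (cos (α/2)) (sin (α/2)) R with hθ
  have hθs : ContDiff ℝ (⊤ : ℕ∞) θ := thet_contDiff _ _ _
  set u1 : ℝ × ℝ → ℂ := fun x => (cos (θ x) : ℂ) * u x with hu1
  set u2 : ℝ × ℝ → ℂ := fun x => (sin (θ x) : ℂ) * u x with hu2
  have hcos : ContDiff ℝ (⊤ : ℕ∞) (fun x => ((Real.cos (θ x) : ℝ) : ℂ)) := cd_ofReal hθs.cos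
  have hsin : ContDiff ℝ (⊤ : ℕ∞) (fun x => ((Real.sin (θ x) : ℝ) : ℂ)) := cd_ofReal hθs.sin
  have s1 : ContDiff ℝ (⊤ : ℕ∞) u1 := by simpa [hu1] using hcos.mul hs
  have s2 : ContDiff ℝ (⊤ : ℕ∞) u2 := by simpa [hu2] using hsin.mul hs
  have k1 : HasCompactSupport u1 := hc.mul_left
  have k2 : HasCompactSupport u2 := hc.mul_left
  have n1 : ∀ x, ‖u1 x‖ ^ 2 = cos (θ x) ^ 2 * ‖u x‖ ^ 2 := by
    intro x
    rw [hu1]; simp only [norm_mul, mul_pow]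
    rw [Complex.norm_real, Real.norm_eq_abs, sq_abs]
  have n2 : ∀ x, ‖u2 x‖ ^ 2 = sin (θ x) ^ 2 * ‖u x‖ ^ 2 := by
    intro x
    rw [hu2]; simp only [norm_mul, mul_pow]
    rw [Complex.norm_real, Real.norm_eq_abs, sq_abs]
  have hw : ∀ x : ℝ × ℝ, sin (α/2) * x.1 - cos (α/2) * x.2 < R → u2 x = 0 := by
    intro x hx
    have : θ x = 0 := by
      rw [hθ, thet, Real.smoothTransition.zero_of_nonpos, mul_zero]
      have := (div_lt_one hR).2 hx
      linarith
    simp [hu2, this]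
  have B2 := lower_hp (γ := γ) hα τ R hR s2 k2 hw
  rw [← hΛ] at B2
  set b1 := sin γ * cos (α/2) with hb1
  set b2 := sin γ * sin (α/2) with hb2
  set b3 := cos γ
  have i1 := (integrable_dens s1 k1 b1 b2 b3 τ).restrict (s := sector α)
  have i2 := (integrable_dens s2 k2 b1 b2 b3 τ).restrict (s := sector α)
  have i0 := (integrable_dens hs hc b1 b2 b3 τ).restrict (s := sector α)
  have j0 := (integrable_sq hs.continuous hc).restrict (s := sector α)
  have j1 := (integrable_sq s1.continuous k1).restrict (s := sector α)
  have j2 := (integrable_sq s2.continuous k2).restrict (s := sector α)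
  have B1 : Λ * norm2D (sector α) u1 ≤ energy2D (sector α) b1 b2 b3 τ u1 := by
    rw [energy_eq, norm2D, ← integral_const_mul]
    apply integral_mono (j1.const_mul _) i1
    intro x
    simp only
    by_cases hd : sin (α/2) * x.1 - cos (α/2) * x.2 < 2 * R
    · have hV : x.1 * b2 - x.2 * b1 - τ ≤ - (τ / 2) := by
        have : x.1 * b2 - x.2 * b1 = sin γ * (sin (α/2) * x.1 - cos (α/2) * x.2) := by
          rw [hb1, hb2]; ring
        rw [this]
        have := mul_le_mul_of_nonneg_left hd.le hγ.le
        nlinarith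
      have hV2 : Λ ≤ (x.1 * b2 - x.2 * b1 - τ) ^ 2 := by nlinarith
      have : Λ * ‖u1 x‖ ^ 2 ≤ (x.1 * b2 - x.2 * b1 - τ) ^ 2 * ‖u1 x‖ ^ 2 :=
        mul_le_mul_of_nonneg_right hV2 (by positivity)
      rw [dens]
      have h3 := sq_nonneg ‖(-Complex.I) * fderiv ℝ u1 x (1, 0) + ((x.2 * b3 : ℝ) : ℂ) * u1 x‖
      have h4 := sq_nonneg ‖fderiv ℝ u1 x (0, 1)‖
      linarith
    · have hx : θ x = π / 2 := by
        rw [hθ, thet, Real.smoothTransition.one_of_one_le, mul_one]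
        have := (le_div_iff₀ hR).2 (not_lt.1 hd)
        linarith
      rw [n1, hx, cos_pi_div_two]
      have := dens_nonneg b1 b2 b3 τ u1 x
      simpa using this
  have hE : energy2D (sector α) b1 b2 b3 τ u1 + energy2D (sector α) b1 b2 b3 τ u2 ≤
      energy2D (sector α) b1 b2 b3 τ u + (π / 2 * M) ^ 2 / R ^ 2 * norm2D (sector α) u := by
    simp only [energy_eq, norm2D]
    rw [← integral_add i1 i2, ← integral_const_mul, ← integral_add i0 (j0.const_mul _)]
    apply integral_mono (i1.add i2) (i0.add (j0.const_mul _))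
    intro x
    have := ims b1 b2 b3 τ hθs hs x
    have hg := thet_grad (R := R) hCS hM x
    have hg' := mul_le_mul_of_nonneg_right hg (sq_nonneg ‖u x‖)
    simp only [Pi.add_apply]
    linarith
  have hN : norm2D (sector α) u1 + norm2D (sector α) u2 = norm2D (sector α) u := by
    simp only [norm2D]
    rw [← integral_add j1 j2]
    congr 1
    ext x
    rw [n1, n2]
    linear_combination ‖u x‖ ^ 2 * cos_sq_add_sin_sq (θ x)
  have hfin : (π / 2 * M) ^ 2 / R ^ 2 = (π / 2 * M) ^ 2 * 16 * sin γ ^ 2 / τ ^ 2 := by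
    rw [hRdef]; field_simp; norm_num
  rw [hfin] at hE
  rw [← hN] at hE ⊢
  linarith

lemma band_neg {α γ : ℝ} (hα : α ∈ Set.Ioo 0 π) (hγ : 0 ≤ sin γ) {τ : ℝ} (hτ : τ ≤ 0) :
    τ ^ 2 ≤ bandFn α (sin γ * cos (α/2)) (sin γ * sin (α/2)) (cos γ) τ := by
  apply le_band hα
  intro u hs hc _
  rw [energy_eq, norm2D, ← integral_const_mul]
  apply setIntegral_mono_on ((integrable_sq hs.continuous hc).const_mul _).integrableOn
    (integrable_dens hs hc _ _ _ _).integrableOn meas_sector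
  intro x hx
  have hd := ((mem_sector hα x).1 hx).1
  have hV : -τ ≤ x.1 * (sin γ * sin (α/2)) - x.2 * (sin γ * cos (α/2)) - τ := by
    nlinarith [mul_nonneg hγ hd]
  have hV2 : τ ^ 2 ≤ (x.1 * (sin γ * sin (α/2)) - x.2 * (sin γ * cos (α/2)) - τ) ^ 2 := by nlinarith
  have := mul_le_mul_of_nonneg_right hV2 (sq_nonneg ‖u x‖)
  rw [dens]
  have h3 := sq_nonneg ‖(-Complex.I) * fderiv ℝ u x (1, 0) + ((x.2 * cos γ : ℝ) : ℂ) * u x‖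
  have h4 := sq_nonneg ‖fderiv ℝ u x (0, 1)‖
  linarith

end MagWedge

open MagWedge in
theorem attains_aux (α γ : ℝ) (hα : α ∈ Set.Ioo 0 π) (hγ : γ ∈ Set.Icc 0 (π / 2)) :
    ∃ τs : ℝ, bandFn α (sin γ * cos (α/2)) (sin γ * sin (α/2)) (cos γ) τs =
      ⨅ τ : ℝ, bandFn α (sin γ * cos (α/2)) (sin γ * sin (α/2)) (cos γ) τ := by
  have hbdd : BddBelow (range fun τ => bandFn α (sin γ * cos (α/2)) (sin γ * sin (α/2)) (cos γ) τ) :=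
    ⟨0, by rintro _ ⟨τ, rfl⟩; exact band_nonneg hα _ _ _ _⟩
  suffices H : ∃ τs, ∀ τ, bandFn α (sin γ * cos (α/2)) (sin γ * sin (α/2)) (cos γ) τs ≤
      bandFn α (sin γ * cos (α/2)) (sin γ * sin (α/2)) (cos γ) τ by
    obtain ⟨τs, h⟩ := H
    exact ⟨τs, le_antisymm (le_ciInf h) (ciInf_le hbdd τs)⟩
  have hsin : 0 ≤ sin γ := sin_nonneg_of_nonneg_of_le_pi hγ.1 (by linarith [hγ.2, pi_pos])
  rcases hsin.eq_or_lt with h0 | h0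
  · refine ⟨0, fun τ => ?_⟩
    rw [← h0]
    apply le_band hα
    intro u hs hc hn
    refine (band_mul_le α _ _ _ 0 hs hc hn).trans ?_
    rw [energy_eq, energy_eq]
    apply integral_mono (integrable_dens hs hc _ _ _ _).restrict (integrable_dens hs hc _ _ _ _).restrict
    intro x
    simp only [dens]
    have : (x.1 * (0 * sin (α/2)) - x.2 * (0 * cos (α/2)) - 0) ^ 2 * ‖u x‖ ^ 2 ≤
      (x.1 * (0 * sin (α/2)) - x.2 * (0 * cos (α/2)) - τ) ^ 2 * ‖u x‖ ^ 2 := by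
      apply mul_le_mul_of_nonneg_right _ (by positivity)
      nlinarith [sq_nonneg τ]
    linarith
  · obtain ⟨K, hK⟩ := band_lower hα h0
    obtain ⟨hC, hS⟩ := half_pos hα
    set s := fun τ => bandFn α (sin γ * cos (α/2)) (sin γ * sin (α/2)) (cos γ) τ with hs
    set P := (2 * sin γ * sin (α/2) * cos (α/2)) ^ 2 with hP
    have hPp : 0 < P := by positivity
    set Λ := (1 - P) * Th + P with hΛ
    have hΛT : Th < Λ := by
      have := mul_pos hPp (sub_pos.2 Th_lt_one)
      rw [hΛ]; linarith
    set m := (Th + Λ) / 2 with hm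
    have hmΛ : m < Λ := by rw [hm]; linarith
    obtain ⟨τ0, hτ0⟩ := band_upper hα γ m (by rw [hm]; linarith)
    have hΛ0 : 0 < Λ := lt_of_le_of_lt Th_nonneg hΛT
    have hlim : ∃ T, 1 ≤ T ∧ 4 * Λ + m + |K| / (Λ - m) ≤ T ∧ |τ0| ≤ T :=
      ⟨max 1 (max (4 * Λ + m + |K| / (Λ - m)) |τ0|), le_max_left _ _,
        (le_max_left _ _).trans (le_max_right _ _), (le_max_right _ _).trans (le_max_right _ _)⟩
    obtain ⟨T, hT1, hT2, hT3⟩ := hlim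
    have hm0 : 0 ≤ m := by have := Th_nonneg; rw [hm]; linarith
    have hKq : 0 ≤ |K| / (Λ - m) := div_nonneg (abs_nonneg _) (by linarith)
    have hout : ∀ τ, τ ∉ Icc (-T) T → m ≤ s τ := by
      intro τ hτ
      rcases le_or_gt τ 0 with h | h
      · have hlt : τ < -T := by
          by_contra hcon
          exact hτ ⟨not_lt.1 hcon, by linarith⟩
        have := band_neg hα hsin h
        have : m ≤ τ ^ 2 := by nlinarith
        simp only [hs]; linarith
      · have hgt : T < τ := by
          by_contra hcon
          exact hτ ⟨by linarith, not_lt.1 hcon⟩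
        have hττ : τ ≤ τ ^ 2 := by nlinarith
        have := hK τ Λ h rfl (by linarith)
        have hq : K / τ ^ 2 ≤ Λ - m := by
          rw [div_le_iff₀ (by positivity)]
          have h1 : |K| / (Λ - m) ≤ τ ^ 2 := by linarith
          rw [div_le_iff₀ (by linarith)] at h1
          linarith [le_abs_self K]
        simp only [hs]; linarith
    have hcont : Continuous s := band_continuous hα _ _ _
    obtain ⟨τs, hmem, hmin⟩ := isCompact_Icc.exists_isMinOn (s := Icc (-T) T)
      ⟨τ0, abs_le.1 hT3⟩ hcont.continuousOn
    refine ⟨τs, fun τ => ?_⟩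
    by_cases hτ : τ ∈ Icc (-T) T
    · exact hmin hτ
    · have h1 : s τs ≤ s τ0 := hmin (abs_le.1 hT3)
      have h2 := hout τ hτ
      simp only [hs] at h1 h2
      linarith

open MagWedge in
/-- the band function attains its infimum. -/
theorem bandFn_attains_inf (α γ : ℝ) (hα : α ∈ Set.Ioo 0 π) (hγ : γ ∈ Set.Icc 0 (π / 2)) :
    ∃ τs : ℝ,
      bandFn α (Real.sin γ * Real.cos (α / 2)) (Real.sin γ * Real.sin (α / 2)) (Real.cos γ) τs
        = ⨅ τ : ℝ, bandFn α
            (Real.sin γ * Real.cos (α / 2)) (Real.sin γ * Real.sin (α / 2)) (Real.cos γ) τ := by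
  exact attains_aux α γ hα hγ
end
end

section
/- Let α ∈ (0,π), (b₁,b₂,b₃) ∈ ℝ³, and let f : [0,∞) → ℂ be smooth and compactly supported. Define u(ρ,η) := f(ρ) on Ω₀ := (0,∞) × (−1/2,1/2). Then ∫_{Ω₀} ( |∂_ρ u − i·α·ρ·η·b₃·u|² + (1/(α²ρ²))·|∂_η u|² + (ρ·cos(ηα)·b₂ − ρ·sin(ηα)·b₁)²·|u|² )·ρ dρ dη = ∫₀^∞ |f′(ρ)|²·ρ dρ + ( b₂² + (α²/12)·b₃² + (1/2)·(1 − sinc α)·(b₁² − b₂²) )·∫₀^∞ ρ²·|f(ρ)|²·ρ dρ, where sinc α := (sin α)/α. -/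
open Real MeasureTheory Set Filter

noncomputable section

open MagWedge in
/-- evaluation of the polar-coordinate quadratic form on radial functions
`u(ρ,η) = f(ρ)` on `Ω₀ = (0,∞) × (−1/2,1/2)`. -/
theorem polar_form_radial (α b1 b2 b3 : ℝ) (hα : α ∈ Set.Ioo 0 π) (f : ℝ → ℂ)
    (hf : ContDiff ℝ (⊤ : ℕ∞) f) (hsupp : HasCompactSupport f) :
    (∫ x in Set.Ioi (0 : ℝ) ×ˢ Set.Ioo (-(1 : ℝ) / 2) (1 / 2),
        (‖fderiv ℝ (fun p : ℝ × ℝ => f p.1) x (1, 0)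
            - Complex.I * ((α * x.1 * x.2 * b3 : ℝ) : ℂ) * f x.1‖ ^ 2
          + 1 / (α ^ 2 * x.1 ^ 2) * ‖fderiv ℝ (fun p : ℝ × ℝ => f p.1) x (0, 1)‖ ^ 2
          + (x.1 * Real.cos (x.2 * α) * b2 - x.1 * Real.sin (x.2 * α) * b1) ^ 2
            * ‖f x.1‖ ^ 2) * x.1)
      = (∫ ρ in Set.Ioi (0 : ℝ), ‖deriv f ρ‖ ^ 2 * ρ)
        + (b2 ^ 2 + α ^ 2 / 12 * b3 ^ 2 + 1 / 2 * (1 - Real.sin α / α) * (b1 ^ 2 - b2 ^ 2))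
          * ∫ ρ in Set.Ioi (0 : ℝ), ρ ^ 2 * ‖f ρ‖ ^ 2 * ρ := by
  obtain ⟨hα0, -⟩ := hα
  have hfd : Differentiable ℝ f := hf.differentiable (by simp)
  have hcf : Continuous f := hf.continuous
  have hcd : Continuous (deriv f) := hf.continuous_deriv (by simp)
  have hsd : HasCompactSupport (deriv f) := hsupp.deriv
  set s := Set.Ioi (0 : ℝ) with hs
  set t := Set.Ioo (-(1 : ℝ) / 2) (1 / 2) with ht
  set A : ℝ → ℝ := fun ρ => ‖deriv f ρ‖ ^ 2 * ρ with hA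
  set C : ℝ → ℝ := fun ρ => ρ ^ 2 * ‖f ρ‖ ^ 2 * ρ with hC
  set B : ℝ → ℝ := fun ρ =>
    2 * α * b3 * ((deriv f ρ).re * (f ρ).im - (deriv f ρ).im * (f ρ).re) * ρ ^ 2 with hB
  set g : ℝ → ℝ := fun η => α ^ 2 * b3 ^ 2 * η ^ 2
    + (Real.cos (η * α) * b2 - Real.sin (η * α) * b1) ^ 2 with hg
  have fd : ∀ x : ℝ × ℝ, ∀ v : ℝ × ℝ,
      fderiv ℝ (fun p : ℝ × ℝ => f p.1) x v = (v.1 : ℂ) * deriv f x.1 := by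
    intro x v
    have h1 : HasFDerivAt f (fderiv ℝ f x.1) x.1 := (hfd x.1).hasFDerivAt
    have h2 : HasFDerivAt (fun p : ℝ × ℝ => f p.1) _ x :=
      HasFDerivAt.comp x (f := Prod.fst) (g := f) h1 hasFDerivAt_fst
    rw [h2.fderiv]
    simp [fderiv_eq_smul_deriv]
  have hint : ∀ x : ℝ × ℝ,
      (‖fderiv ℝ (fun p : ℝ × ℝ => f p.1) x (1, 0)
            - Complex.I * ((α * x.1 * x.2 * b3 : ℝ) : ℂ) * f x.1‖ ^ 2
          + 1 / (α ^ 2 * x.1 ^ 2) * ‖fderiv ℝ (fun p : ℝ × ℝ => f p.1) x (0, 1)‖ ^ 2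
          + (x.1 * Real.cos (x.2 * α) * b2 - x.1 * Real.sin (x.2 * α) * b1) ^ 2
            * ‖f x.1‖ ^ 2) * x.1
      = A x.1 * (fun _ : ℝ => (1 : ℝ)) x.2 + B x.1 * (fun η : ℝ => η) x.2 + C x.1 * g x.2 := by
    intro x
    rw [fd, fd]
    simp only [hA, hB, hC, hg, Complex.ofReal_one, one_mul, Complex.ofReal_zero, zero_mul,
      norm_zero, Complex.sq_norm, Complex.normSq_apply]
    simp
    ring
  have iA : Integrable A (volume.restrict s) := by
    refine (Continuous.integrable_of_hasCompactSupport (by fun_prop) ?_).restrict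
    refine hsd.mono ?_
    intro x hx h
    apply hx
    simp_all [hA]
  have iB : Integrable B (volume.restrict s) := by
    refine (Continuous.integrable_of_hasCompactSupport (by fun_prop) ?_).restrict
    refine hsd.mono ?_
    intro x hx h
    apply hx
    simp_all [hB]
  have iC : Integrable C (volume.restrict s) := by
    refine (Continuous.integrable_of_hasCompactSupport (by fun_prop) ?_).restrict
    refine hsupp.mono ?_
    intro x hx h
    apply hx
    simp_all [hC]
  have it : ∀ h : ℝ → ℝ, Continuous h → Integrable h (volume.restrict t) := by
    intro h hh
    exact (hh.integrableOn_Icc (a := -(1 : ℝ) / 2) (b := 1 / 2)).mono_set Set.Ioo_subset_Icc_self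
  have hgc : Continuous g := by fun_prop
  have conv : ∀ h : ℝ → ℝ, ∫ η in t, h η = ∫ η in (-(1 : ℝ) / 2)..(1 / 2), h η := by
    intro h
    rw [intervalIntegral.integral_of_le (by norm_num), ← integral_Ioc_eq_integral_Ioo]
  have e1 : ∫ η in t, (fun _ : ℝ => (1 : ℝ)) η = 1 := by
    rw [conv]; simp; norm_num
  have e2 : ∫ η in t, (fun η : ℝ => η) η = 0 := by
    rw [conv]; simp; norm_num
  have e3 : ∫ η in t, g η = b2 ^ 2 + α ^ 2 / 12 * b3 ^ 2
      + 1 / 2 * (1 - Real.sin α / α) * (b1 ^ 2 - b2 ^ 2) := by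
    rw [conv]
    have hd : ∀ η : ℝ, HasDerivAt (fun η : ℝ => α ^ 2 * b3 ^ 2 * η ^ 3 / 3
        + b2 ^ 2 * (η / 2 + Real.sin (η * α) * Real.cos (η * α) / (2 * α))
        + b1 ^ 2 * (η / 2 - Real.sin (η * α) * Real.cos (η * α) / (2 * α))
        - b1 * b2 * Real.sin (η * α) ^ 2 / α) (g η) η := by
      intro η
      have hm : HasDerivAt (fun η : ℝ => η * α) α η := by
        simpa using (hasDerivAt_id η).mul_const α
      have hS := hm.sin
      have hK := hm.cos
      have hSK := (hS.mul hK).div_const (2 * α)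
      have hid := (hasDerivAt_id η).div_const 2
      have h3 := (((hasDerivAt_id η).pow 3).const_mul (α ^ 2 * b3 ^ 2)).div_const 3
      have := ((h3.add ((hid.add hSK).const_mul (b2 ^ 2))).add
        ((hid.sub hSK).const_mul (b1 ^ 2))).sub (((hS.pow 2).const_mul (b1 * b2)).div_const α)
      refine this.congr_deriv ?_
      simp only [hg, id]
      have hpy := Real.sin_sq_add_cos_sq (η * α)
      generalize Real.sin (η * α) = S at hpy ⊢
      generalize Real.cos (η * α) = K at hpy ⊢
      field_simp
      simp
      linear_combination (-3) * (b1 ^ 2 + b2 ^ 2) * hpy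
    rw [intervalIntegral.integral_eq_sub_of_hasDerivAt (fun η _ => hd η)
      (hgc.intervalIntegrable _ _)]
    have h4 : Real.sin α = 2 * Real.sin (α / 2) * Real.cos (α / 2) := by
      rw [← Real.sin_two_mul]; congr 1; ring
    have h5 : -(1:ℝ) / 2 * α = -(α / 2) := by ring
    have h6 : (1:ℝ) / 2 * α = α / 2 := by ring
    rw [h5, h6, Real.sin_neg, Real.cos_neg, h4]
    field_simp
    ring
  simp_rw [hint]
  have hv : (volume : Measure (ℝ × ℝ)).restrict (s ×ˢ t)
      = (volume.restrict s).prod (volume.restrict t) := by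
    rw [Measure.prod_restrict]; rfl
  have p1 := integral_prod_mul (μ := volume.restrict s) (ν := volume.restrict t)
    A (fun _ : ℝ => (1 : ℝ))
  have p2 := integral_prod_mul (μ := volume.restrict s) (ν := volume.restrict t)
    B (fun η : ℝ => η)
  rw [e1] at p1
  rw [e2] at p2
  rw [hv, integral_add, integral_add, p1, p2, integral_prod_mul, e3]
  · ring
  · exact iA.mul_prod (it _ continuous_const)
  · exact iB.mul_prod (it _ continuous_id)
  · exact (iA.mul_prod (it _ continuous_const)).add (iB.mul_prod (it _ continuous_id))
  · exact iC.mul_prod (it _ hgc)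
end
end
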